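/- arXiv:2201.03880 — 2 statements merged into one kernel-verified Lean document; each statement's English description precedes it below -/
import Mathlib

section
/- For all positive integers k and s, if G is a graph of cliquewidth less than k that contains no K_{s,s} as a subgraph and has a path of order n, then G has an induced path of order at least (1/4)·(log₂ n)^(1/(3(k−1)(s−1))). -/
open SimpleGraph Real

/-- `G` has a (not necessarily induced) path on `n` vertices. -/
def HasPathOfOrder {V : Type*} (G : SimpleGraph V) (n : ℕ) : Prop :=
  ∃ (u v : V) (p : G.Walk u v), p.IsPath ∧ p.length + 1 = n

/-- `G` has a Hamiltonian path. -/
def HasHamPath {V : Type*} (G : SimpleGraph V) : Prop :=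
  ∃ (u v : V) (p : G.Walk u v), p.IsPath ∧ ∀ w, w ∈ p.support

/-- `G` has an induced path on at least `r` vertices (an induced subgraph isomorphic to a
path graph on `m ≥ r` vertices). -/
def HasInducedPathGE {V : Type*} (G : SimpleGraph V) (r : ℝ) : Prop :=
  ∃ m : ℕ, r ≤ (m : ℝ) ∧ Nonempty (pathGraph m ↪g G)

/-- A tree (or path) representation of `G` over the graph `T`: every vertex `v` of `G` has a
nonempty connected model `model v ⊆ V(T)`, and models of adjacent vertices intersect. -/
structure TreeRep {V N : Type*} (G : SimpleGraph V) (T : SimpleGraph N) where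
  model : V → Set N
  model_connected : ∀ v, (T.induce (model v)).Connected
  adj_meet : ∀ ⦃u v⦄, G.Adj u v → (model u ∩ model v).Nonempty

namespace TreeRep

variable {V N : Type*} {G : SimpleGraph V} {T : SimpleGraph N}

/-- The bag of the representation at a node `t`. -/
def bag (R : TreeRep G T) (t : N) : Set V := {v | t ∈ R.model v}

/-- The representation has width less than `k`, i.e. all bags have at most `k` vertices. -/
def WidthLT (R : TreeRep G T) (k : ℕ) : Prop := ∀ t, (R.bag t).ncard ≤ k

/-- The representation has width at most `k`, i.e. all bags have at most `k + 1` vertices. -/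
def WidthLE (R : TreeRep G T) (k : ℕ) : Prop := ∀ t, (R.bag t).ncard ≤ k + 1

/-- The weight of a path `p` of `T`: the number of vertices of `G` whose model meets `p`. -/
noncomputable def pathWeight (R : TreeRep G T) {x y : N} (p : T.Walk x y) : ℕ :=
  {v : V | ∃ t ∈ p.support, t ∈ R.model v}.ncard

/-- A representation is varied if no bag is contained in the bag at a neighboring node. -/
def Varied (R : TreeRep G T) : Prop := ∀ ⦃t t'⦄, T.Adj t t' → ¬ R.bag t ⊆ R.bag t'

/-- The representation has adhesion less than `a`: the adhesion set of every edge of `T`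
has fewer than `a` vertices. -/
def AdhesionLT (R : TreeRep G T) (a : ℕ) : Prop :=
  ∀ ⦃t t'⦄, T.Adj t t' → (R.bag t ∩ R.bag t').ncard < a

/-- The torso of the representation at a node `t`: the subgraph induced on the bag at `t`
together with all edges inside adhesion sets of edges of `T` incident to `t`. -/
def torso (R : TreeRep G T) (t : N) : SimpleGraph (R.bag t) :=
  SimpleGraph.fromRel (fun u v =>
    G.Adj u v ∨ ∃ t', T.Adj t t' ∧ (u : V) ∈ R.bag t' ∧ (v : V) ∈ R.bag t')

end TreeRep

/-- `G` has pathwidth less than `k`: it has a representation over a path all of whose bags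
have at most `k` vertices. -/
def PathwidthLT {V : Type*} (G : SimpleGraph V) (k : ℕ) : Prop :=
  ∃ (m : ℕ) (R : TreeRep G (pathGraph (m + 1))), R.WidthLT k

/-- `G` has treewidth less than `k`: it has a representation over a tree all of whose bags
have at most `k` vertices. -/
def TreewidthLT {V : Type*} (G : SimpleGraph V) (k : ℕ) : Prop :=
  ∃ (N : Type) (_ : Fintype N) (T : SimpleGraph N), T.IsTree ∧
    ∃ R : TreeRep G T, R.WidthLT k

/-- `G` has treewidth at most `k`. -/
def TreewidthLE {V : Type*} (G : SimpleGraph V) (k : ℕ) : Prop :=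
  ∃ (N : Type) (_ : Fintype N) (T : SimpleGraph N), T.IsTree ∧
    ∃ R : TreeRep G T, R.WidthLE k

/-- A leaf of a graph: a vertex with at most one neighbor. -/
def IsLeafNode {N : Type*} (T : SimpleGraph N) (l : N) : Prop :=
  (T.neighborSet l).Subsingleton

/-- `H` is obtained from `G` by a sequence of edge contractions: there is a surjection
from `V(G)` onto `V(H)` with connected fibers inducing the adjacency of `H`. -/
def IsContraction {W V : Type*} (H : SimpleGraph W) (G : SimpleGraph V) : Prop :=
  ∃ f : V → W, Function.Surjective f ∧
    (∀ w : W, (G.induce (f ⁻¹' {w})).Connected) ∧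
    (∀ x y : W, H.Adj x y ↔ x ≠ y ∧ ∃ u v : V, f u = x ∧ f v = y ∧ G.Adj u v)

/-- `G` is an interval graph: the intersection graph of a family of real intervals. -/
def IsIntervalGraph {V : Type*} (G : SimpleGraph V) : Prop :=
  ∃ l r : V → ℝ, (∀ v, l v ≤ r v) ∧
    ∀ u v : V, G.Adj u v ↔ u ≠ v ∧ max (l u) (l v) ≤ min (r u) (r v)

/-- The internal vertices of a walk: vertices of the walk distinct from its two endpoints. -/
def WalkInternal {V : Type*} {G : SimpleGraph V} {x y : V} (p : G.Walk x y) : Set V :=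
  {w | w ∈ p.support ∧ w ≠ x ∧ w ≠ y}

/-- `H` is a topological minor of `G`: there are branch vertices `φ u` for `u ∈ V(H)` and
internally disjoint paths of `G` joining them, one for each edge of `H`. -/
def IsTopMinor {W V : Type*} (H : SimpleGraph W) (G : SimpleGraph V) : Prop :=
  ∃ (φ : W ↪ V) (P : ∀ ⦃u v : W⦄, H.Adj u v → G.Walk (φ u) (φ v)),
    (∀ ⦃u v⦄ (h : H.Adj u v), (P h).IsPath) ∧
    (∀ ⦃u v⦄ (h : H.Adj u v), P h.symm = (P h).reverse) ∧
    (∀ ⦃u v⦄ (h : H.Adj u v), ∀ w ∈ WalkInternal (P h), w ∉ Set.range φ) ∧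
    (∀ ⦃u v u' v'⦄ (h : H.Adj u v) (h' : H.Adj u' v'), s(u, v) ≠ s(u', v') →
      ∀ w ∈ WalkInternal (P h), w ∉ WalkInternal (P h'))

/-- `H` is (an isomorphic copy of) a subgraph of `G`. -/
def ContainsSubgraphCopy {A B : Type*} (H : SimpleGraph A) (G : SimpleGraph B) : Prop :=
  ∃ f : A ↪ B, ∀ u v : A, H.Adj u v → G.Adj (f u) (f v)

/-- `G` is `k`-degenerate: every (induced) subgraph has a vertex of degree at most `k`. -/
def Degenerate {V : Type*} (G : SimpleGraph V) (k : ℕ) : Prop :=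
  ∀ s : Set V, s.Nonempty → ∃ v ∈ s, {w | w ∈ s ∧ G.Adj v w}.ncard ≤ k

/-- The cycle on `ZMod m` (for `m ≥ 3` this is the cycle graph on `m` vertices). -/
def ringGraph (m : ℕ) : SimpleGraph (ZMod m) :=
  SimpleGraph.fromRel (fun i j => j = i + 1)

/-- Cliquewidth expressions with labels in `Fin k`. -/
inductive CWExpr (k : ℕ) where
  | vertex (l : Fin k) : CWExpr k
  | union (e₁ e₂ : CWExpr k) : CWExpr k
  | addEdges (i j : Fin k) (hij : i ≠ j) (e : CWExpr k) : CWExpr k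
  | relabel (f : Fin k → Fin k) (e : CWExpr k) : CWExpr k

namespace CWExpr

variable {k : ℕ}

/-- The vertex set of the graph described by a cliquewidth expression. -/
def verts : CWExpr k → Type
  | vertex _ => Unit
  | union e₁ e₂ => e₁.verts ⊕ e₂.verts
  | addEdges _ _ _ e => e.verts
  | relabel _ e => e.verts

/-- The labelling of the vertices described by a cliquewidth expression. -/
def label : (e : CWExpr k) → e.verts → Fin k
  | vertex l, _ => l
  | union e₁ _, Sum.inl x => e₁.label x
  | union _ e₂, Sum.inr x => e₂.label x
  | addEdges _ _ _ e, x => e.label x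
  | relabel f e, x => f (e.label x)

/-- The adjacency relation described by a cliquewidth expression. -/
def adj : (e : CWExpr k) → e.verts → e.verts → Prop
  | vertex _, _, _ => False
  | union e₁ _, Sum.inl x, Sum.inl y => e₁.adj x y
  | union _ e₂, Sum.inr x, Sum.inr y => e₂.adj x y
  | union _ _, _, _ => False
  | addEdges i j _ e, x, y =>
      e.adj x y ∨ (e.label x = i ∧ e.label y = j) ∨ (e.label x = j ∧ e.label y = i)
  | relabel _ e, x, y => e.adj x y

/-- The graph described by a cliquewidth expression. -/
def graph (e : CWExpr k) : SimpleGraph e.verts := SimpleGraph.fromRel e.adj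

end CWExpr

/-- `G` has cliquewidth at most `k`: it is isomorphic to the graph of a cliquewidth
expression with at most `k` labels. -/
def CliquewidthLE {V : Type*} (G : SimpleGraph V) (k : ℕ) : Prop :=
  ∃ e : CWExpr k, Nonempty (G ≃g e.graph)

/-- `G` has `(k, Δ)`-almost bounded degree: removing at most `k` vertices yields a graph of
maximum degree at most `Δ`. -/
def AlmostBoundedDegree {V : Type*} (G : SimpleGraph V) (k Δ : ℕ) : Prop :=
  ∃ X : Set V, X.ncard ≤ k ∧ ∀ v ∉ X, {w | w ∉ X ∧ G.Adj v w}.ncard ≤ Δ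

/-- An embedding scheme for `H`: a rotation system (a permutation of the darts that is,
around each vertex, a single cycle on the darts leaving that vertex) together with a
signature on the edges. -/
structure EmbScheme {W : Type*} (H : SimpleGraph W) where
  rot : Equiv.Perm H.Dart
  rot_fst : ∀ d : H.Dart, (rot d).fst = d.fst
  rot_cyclic : ∀ d d' : H.Dart, d.fst = d'.fst → ∃ n : ℕ, (rot ^ n) d = d'
  sign : Sym2 W → Bool

namespace EmbScheme

variable {W : Type*} {H : SimpleGraph W}

/-- The face-tracing step of an embedding scheme, acting on darts with a direction. -/
def faceStep (S : EmbScheme H) : H.Dart × Bool → H.Dart × Bool :=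
  fun p =>
    let s' := xor p.2 (S.sign p.1.edge)
    ((if s' then S.rot.symm p.1.symm else S.rot p.1.symm), s')

/-- The number of orbits of a function. -/
noncomputable def orbitCount {α : Type*} (f : α → α) : ℕ :=
  Nat.card (Quotient (Relation.EqvGen.setoid (fun x y => f x = y)))

/-- The scheme describes an embedding of `H` in a surface of Euler genus at most `g`.
Isolated vertices each bound one face; every other face is traced twice by `faceStep`,
so the number of faces is `orbitCount (faceStep) / 2` plus the number of isolated
vertices, and the Euler genus of the embedding is `2c - |V| + |E| - F`. -/
def GenusLE (S : EmbScheme H) (g : ℕ) : Prop :=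
  2 * Nat.card H.ConnectedComponent + Nat.card H.edgeSet ≤
    g + Nat.card W +
      (orbitCount S.faceStep / 2 + Nat.card {v : W | ∀ w, ¬ H.Adj v w})

/-- The cycle `e 0, e 1, …, e (m-1)` is a facial cycle of the embedding scheme `S`:
its consecutive darts are consecutive in a face traversal. -/
def IsFacialCycle (S : EmbScheme H) {m : ℕ} (e : ZMod m → W)
    (hadj : ∀ x : ZMod m, H.Adj (e x) (e (x + 1))) : Prop :=
  ∃ b : ZMod m → Bool, ∀ x : ZMod m,
    S.faceStep (⟨(e x, e (x + 1)), hadj x⟩, b x) =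
      (⟨(e (x + 1), e (x + 1 + 1)), hadj (x + 1)⟩, b (x + 1))

end EmbScheme

/-- `Hs` has a `C`-vortex of width less than `k`, where `C` is the cycle of `G₀` given by
`e`: the vertices common to `Hs` and `G₀` are exactly those of `C`, and `Hs` has a cycle
representation over `C` in which the model of each vertex of `C` contains that vertex and
every bag has at most `k` vertices. -/
def IsVortex {V : Type*} {G : SimpleGraph V} (Hs G₀ : G.Subgraph) {m : ℕ}
    (e : ZMod m → G₀.verts) (k : ℕ) : Prop :=
  Hs.verts ∩ G₀.verts = Subtype.val '' Set.range e ∧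
  ∃ model : Hs.verts → Set (ZMod m),
    (∀ v, ((ringGraph m).induce (model v)).Connected) ∧
    (∀ (x : ZMod m) (v : Hs.verts), (e x : V) = (v : V) → x ∈ model v) ∧
    (∀ ⦃u v⦄, Hs.coe.Adj u v → (model u ∩ model v).Nonempty) ∧
    (∀ t : ZMod m, {v : Hs.verts | t ∈ model v}.ncard ≤ k)

/-- `G` is `(g, p, a, k)`-almost-embeddable. -/
def AlmostEmbeddable {V : Type*} (G : SimpleGraph V) (g p a k : ℕ) : Prop :=
  ∃ A : Set V, A.ncard ≤ a ∧
  ∃ s : ℕ, s ≤ p ∧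
  ∃ (G₀ : G.Subgraph) (Gv : Fin s → G.Subgraph),
    (G₀ ⊔ ⨆ i, Gv i) = (⊤ : G.Subgraph).deleteVerts A ∧
    (∀ i j, i ≠ j → Disjoint (Gv i).verts (Gv j).verts) ∧
    ∃ S : EmbScheme G₀.coe, S.GenusLE g ∧
    ∃ (m : Fin s → ℕ) (e : ∀ i, ZMod (m i) → G₀.verts)
      (hadj : ∀ i x, G₀.coe.Adj (e i x) (e i (x + 1))),
      (∀ i, 3 ≤ m i) ∧
      (∀ i, Function.Injective (e i)) ∧
      (∀ i, S.IsFacialCycle (e i) (hadj i)) ∧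
      (∀ i j, i ≠ j → Disjoint (Set.range (e i)) (Set.range (e j))) ∧
      (∀ i, IsVortex (Gv i) G₀ (e i) k)

/-!
Descend a cliquewidth expression of `G` with `c` labels, following a path `P`. In the vertex set of
a subexpression, a label class with at least `s` vertices has fewer than `s` common neighbors
outside, as `G` has no `K_{s,s}`; hence the edges leaving that vertex set are covered by at most
`c (s - 1)` vertices. At a disjoint union, delete the covers of both sides from `P`: what remains
splits into subpaths that stay on one side, and the descent follows the longest one. The deleted
covers behave like the bags of a path decomposition, they have at most `2 c (s - 1)` vertices, and
together they contain about `log₂ |P|` vertices of `P`.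

An induced path from the first to the last of the bags that `P` meets, running inside `P`, meets all
of these bags. If it has at most `m` vertices, deleting it from `P` leaves a subpath that has still
about a `1 / (m + 1)` fraction of the bag vertices, but meets every bag in fewer vertices than `P`.
This can happen at most `2 c (s - 1)` times, so `log₂ |P|` is at most about
`(m + 1) ^ (2 c (s - 1))`.
-/

namespace InducedPath

open scoped List

section List

variable {α : Type*} {l l' : List α}

theorem exists_infix_countP_takeWhile_le (p q : α → Prop) [DecidablePred p] [DecidablePred q]
    (l : List α) :
    ∃ l', l' <:+: l ∧ (∀ x ∈ l', ¬ p x) ∧ (l.takeWhile (¬ p ·)).countP q ≤ l'.countP q ∧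
      l.countP q ≤ (l.takeWhile (¬ p ·)).countP q + l.countP p * (l'.countP q + 1) := by
  induction l with
  | nil => exact ⟨[], by simp⟩
  | cons a l ih =>
    obtain ⟨l', hl', hp, hprefix, hcount⟩ := ih
    by_cases hpa : p a
    · refine ⟨l', hl'.trans (List.infix_cons List.infix_rfl), hp, by simp [hpa], ?_⟩
      rw [List.takeWhile_cons_of_neg (by simpa), List.countP_cons_of_pos (p := (p ·)) (by simpa),
        List.countP_nil]
      have ha : (a :: l).countP q ≤ l.countP q + 1 := by
        rw [List.countP_cons]; split <;> omega
      linarith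
    · have hcons : (a :: l).takeWhile (¬ p ·) = a :: l.takeWhile (¬ p ·) :=
        List.takeWhile_cons_of_pos (by simpa)
      rw [hcons, List.countP_cons_of_neg (p := (p ·)) (by simpa)]
      have ha : (a :: l).countP q + (l.takeWhile (¬ p ·)).countP q =
          (a :: l.takeWhile (¬ p ·)).countP q + l.countP q := by
        simp only [List.countP_cons]; omega
      obtain hle | hlt := le_or_gt ((a :: l.takeWhile (¬ p ·)).countP q) (l'.countP q)
      · exact ⟨l', hl'.trans (List.infix_cons List.infix_rfl), hp, hle, by linarith⟩
      · refine ⟨a :: l.takeWhile (¬ p ·), hcons ▸ (List.takeWhile_prefix _).isInfix, ?_, le_rfl, ?_⟩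
        · intro x hx
          rcases List.mem_cons.1 hx with rfl | hx
          exacts [hpa, by simpa using List.mem_takeWhile_imp hx]
        · have := Nat.mul_le_mul_left (l.countP p) (Nat.succ_le_succ hlt.le)
          linarith

theorem exists_infix_countP_lt (p q : α → Prop) [DecidablePred p] [DecidablePred q]
    (l : List α) :
    ∃ l', l' <:+: l ∧ (∀ x ∈ l', ¬ p x) ∧
      l.countP q < (l.countP p + 1) * (l'.countP q + 1) := by
  obtain ⟨l', hl', hp, hprefix, hcount⟩ := exists_infix_countP_takeWhile_le p q l
  exact ⟨l', hl', hp, by linarith⟩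

theorem countP_add_countP_le_of_infix {p q r : α → Prop} [DecidablePred p] [DecidablePred q]
    [DecidablePred r] (hl : l' <:+: l) (hp : ∀ x ∈ l', ¬ p x)
    (hpr : ∀ x, p x → r x) (hqr : ∀ x, q x → r x) :
    l.countP p + l'.countP q ≤ l.countP r := by
  obtain ⟨l₁, l₂, rfl⟩ := hl
  have hzero : l'.countP p = 0 := List.countP_eq_zero.2 (by simpa using hp)
  have h₁ : l₁.countP p ≤ l₁.countP r := List.countP_mono_left (by simpa using fun x _ => hpr x)
  have h₂ : l₂.countP p ≤ l₂.countP r := List.countP_mono_left (by simpa using fun x _ => hpr x)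
  have h' : l'.countP q ≤ l'.countP r := List.countP_mono_left (by simpa using fun x _ => hqr x)
  simp only [List.countP_append, hzero]
  omega

open scoped Classical in
theorem countP_mem_le_ncard (hl : l.Nodup) {A : Set α} (hA : A.Finite) :
    l.countP (· ∈ A) ≤ A.ncard := by
  rw [List.countP_eq_length_filter, ← List.toFinset_card_of_nodup (hl.filter _),
    Set.ncard_eq_toFinset_card A hA]
  exact Finset.card_le_card fun x hx =>
    hA.mem_toFinset.2 (by simpa using (List.mem_filter.1 (List.mem_toFinset.1 hx)).2)

theorem eq_head_or_eq_getLast_or_sublist {a : α} (ha : a ∈ l) :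
    a = l.head (List.ne_nil_of_mem ha) ∨ a = l.getLast (List.ne_nil_of_mem ha) ∨
      [l.head (List.ne_nil_of_mem ha), a, l.getLast (List.ne_nil_of_mem ha)] <+ l := by
  obtain ⟨b, l, rfl⟩ := List.exists_cons_of_ne_nil (List.ne_nil_of_mem ha)
  rcases List.mem_cons.1 ha with rfl | ha
  · exact .inl rfl
  · rw [List.getLast_cons (List.ne_nil_of_mem ha)]
    have hsplit := List.dropLast_append_getLast (List.ne_nil_of_mem ha)
    rcases List.mem_append.1 (hsplit ▸ ha) with hinit | hlast
    · have hpair :=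
        (List.singleton_sublist.2 hinit).append_right [l.getLast (List.ne_nil_of_mem ha)]
      rw [hsplit] at hpair
      exact .inr (.inr (hpair.cons_cons b))
    · exact .inr (.inl (List.mem_singleton.1 hlast))

end List

section Path

variable {V : Type*} {G : SimpleGraph V} {l : List V} {x y : V}

theorem nonempty_pathGraph_embedding_of_length_eq_dist {p : G.Walk x y}
    (hp : p.length = G.dist x y) : Nonempty (pathGraph (p.length + 1) ↪g G) := by
  have hshort {i j : ℕ} (_ : i ≤ j) (hj : j ≤ p.length)
      (h : G.Adj (p.getVert i) (p.getVert j)) : j ≤ i + 1 := by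
    have := G.dist_le ((p.take i).append (.cons h (p.drop j)))
    simp only [Walk.length_append, Walk.length_cons, Walk.take_length, Walk.drop_length] at this
    omega
  have hinj : Function.Injective fun i : Fin (p.length + 1) => p.getVert i := fun i j h =>
    Fin.ext <| (p.isPath_of_length_eq_dist hp).getVert_injOn (Nat.lt_succ_iff.1 i.2)
      (Nat.lt_succ_iff.1 j.2) h
  have hadj {i j : Fin (p.length + 1)} :
      G.Adj (p.getVert i) (p.getVert j) ↔ (pathGraph (p.length + 1)).Adj i j := by
    rw [pathGraph_adj]
    constructor
    · intro h
      have hne : (i : ℕ) ≠ j := fun hij => h.ne (congrArg p.getVert hij)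
      have hi : (i : ℕ) ≤ j → (j : ℕ) ≤ i + 1 := fun hij => hshort hij (by omega) h
      have hj : (j : ℕ) ≤ i → (i : ℕ) ≤ j + 1 := fun hij => hshort hij (by omega) h.symm
      omega
    · rintro (h | h)
      · exact h ▸ p.adj_getVert_succ (by omega)
      · exact (h ▸ p.adj_getVert_succ (by omega) : G.Adj (p.getVert j) (p.getVert i)).symm
  exact ⟨⟨⟨_, hinj⟩, hadj⟩⟩

theorem exists_inducedPath_of_isChain (hl : l.IsChain G.Adj) (hx : x ∈ l) (hy : y ∈ l) :
    ∃ p : G.Walk x y, p.support ⊆ l ∧ Nonempty (pathGraph (p.length + 1) ↪g G) := by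
  have hconn : (G.induce {v | v ∈ l}).Connected := by
    have := (Walk.ofSupport l (List.ne_nil_of_mem hx) hl).connected_induce_support
    rwa [Walk.support_ofSupport] at this
  obtain ⟨p, hp⟩ := hconn.exists_walk_length_eq_dist ⟨x, hx⟩ ⟨y, hy⟩
  obtain ⟨f⟩ := nonempty_pathGraph_embedding_of_length_eq_dist hp
  let ι : G.induce {v | v ∈ l} ↪g G := Embedding.induce _
  refine ⟨p.map ι.toHom, fun z hz => ?_, ⟨(Walk.length_map ι.toHom p).symm ▸ f.trans ι⟩⟩
  obtain ⟨v, -, rfl⟩ := List.mem_map.1 (Walk.support_map ι.toHom p ▸ hz)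
  exact v.2

theorem exists_max_inducedPath [Finite V] [Nonempty V] (G : SimpleGraph V) :
    ∃ m, 0 < m ∧ Nonempty (pathGraph m ↪g G) ∧ ∀ m', Nonempty (pathGraph m' ↪g G) → m' ≤ m := by
  have hbdd : BddAbove {m | Nonempty (pathGraph m ↪g G)} :=
    ⟨Nat.card V, fun m ⟨f⟩ => by simpa using Nat.card_le_card_of_injective f f.injective⟩
  have hone : Nonempty (pathGraph 1 ↪g G) := by
    let v : V := Classical.arbitrary V
    simpa using nonempty_pathGraph_embedding_of_length_eq_dist (p := (.nil : G.Walk v v)) (by simp)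
  exact ⟨_, le_csSup hbdd hone, Nat.sSup_mem ⟨1, hone⟩ hbdd, fun m' hm' => le_csSup hbdd hm'⟩

end Path

section Separation

variable {V : Type*} {G : SimpleGraph V} {A A' C C' X X' Y B₀ : Set V} {Bs : List (Set V)}

/-- `X` separates `A` from `C` in `G`: every walk from `A` to `C` meets `X`, where the ends of the
walk count as met. -/
def Separates (G : SimpleGraph V) (A C X : Set V) : Prop :=
  ∀ ⦃a⦄, a ∈ A → ∀ ⦃c⦄, c ∈ C → ∀ p : G.Walk a c, ∃ x ∈ p.support, x ∈ X

theorem Separates.mono (h : Separates G A C X) (hA : A' ⊆ A) (hC : C' ⊆ C) (hX : X ⊆ X') :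
    Separates G A' C' X' := fun _ ha _ hc p =>
  let ⟨x, hxp, hx⟩ := h (hA ha) (hC hc) p
  ⟨x, hxp, hX hx⟩

/-- In `Bs`, every bag separates the bags before it from the bags after it, as the bags of a path
decomposition do. -/
def IsSeparating (G : SimpleGraph V) (Bs : List (Set V)) : Prop :=
  ∀ ⦃A B C⦄, [A, B, C] <+ Bs → Separates G A C B

theorem isSeparating_cons : IsSeparating G (X :: Bs) ↔
    IsSeparating G Bs ∧ ∀ ⦃B C⦄, [B, C] <+ Bs → Separates G X C B := by
  refine ⟨fun h => ⟨fun A B C hABC => h (hABC.cons X), fun B C hBC => h (hBC.cons_cons X)⟩, ?_⟩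
  rintro ⟨h, hX⟩ A B C hABC
  rcases List.sublist_cons_iff.1 hABC with hABC | ⟨_, heq, hBC⟩
  · exact h hABC
  · obtain ⟨rfl, rfl⟩ := List.cons_eq_cons.1 heq
    exact hX hBC

theorem IsSeparating.cons_cons (h : IsSeparating G (X :: Bs)) (hY : Y ⊆ X) (hB₀ : B₀ ⊆ X)
    (hsep : ∀ C ∈ Bs, Separates G Y C B₀) : IsSeparating G (Y :: B₀ :: Bs) := by
  obtain ⟨hBs, hX⟩ := isSeparating_cons.1 h
  have hcons {Z : Set V} (hZ : Z ⊆ X) {B C : Set V} (hBC : [B, C] <+ Bs) : Separates G Z C B :=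
    (hX hBC).mono hZ subset_rfl subset_rfl
  refine isSeparating_cons.2 ⟨isSeparating_cons.2 ⟨hBs, fun _ _ => hcons hB₀⟩, fun B C hBC => ?_⟩
  rcases List.sublist_cons_iff.1 hBC with hBC | ⟨_, heq, hC⟩
  · exact hcons hY hBC
  · obtain ⟨rfl, rfl⟩ := List.cons_eq_cons.1 heq
    exact hsep C (List.singleton_sublist.1 hC)

theorem IsSeparating.exists_inducedPath (h : IsSeparating G Bs) {l : List V}
    (hl : l.IsChain G.Adj) (hne : ∃ B ∈ Bs, ∃ v ∈ l, v ∈ B) :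
    ∃ (x y : V) (p : G.Walk x y), p.support ⊆ l ∧ Nonempty (pathGraph (p.length + 1) ↪g G) ∧
      ∀ B ∈ Bs, (∃ v ∈ l, v ∈ B) → ∃ v ∈ p.support, v ∈ B := by
  classical
  let Ds := Bs.filter fun B => ∃ v ∈ l, v ∈ B
  have hmem {D : Set V} : D ∈ Ds ↔ D ∈ Bs ∧ ∃ v ∈ l, v ∈ D := by simp [Ds]
  obtain ⟨B, hB⟩ := hne
  have hDs : Ds ≠ [] := List.ne_nil_of_mem (hmem.2 hB)
  obtain ⟨-, x, hxl, hx⟩ := hmem.1 (Ds.head_mem hDs)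
  obtain ⟨-, y, hyl, hy⟩ := hmem.1 (Ds.getLast_mem hDs)
  obtain ⟨p, hp, hind⟩ := exists_inducedPath_of_isChain hl hxl hyl
  refine ⟨x, y, p, hp, hind, fun D hD hDl => ?_⟩
  rcases eq_head_or_eq_getLast_or_sublist (hmem.2 ⟨hD, hDl⟩) with hhead | hlast | hsub
  · exact ⟨x, p.start_mem_support, hhead ▸ hx⟩
  · exact ⟨y, p.end_mem_support, hlast ▸ hy⟩
  · exact h (hsub.trans List.filter_sublist) hx hy p

open scoped Classical in
theorem IsSeparating.exists_infix_countP_lt (h : IsSeparating G Bs) {m : ℕ}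
    (hm : ∀ m', Nonempty (pathGraph m' ↪g G) → m' ≤ m) {l : List V} (hl : l.IsChain G.Adj)
    (hnodup : l.Nodup) : ∃ l', l' <:+: l ∧
      l.countP (∃ B ∈ Bs, · ∈ B) < (m + 1) * (l'.countP (∃ B ∈ Bs, · ∈ B) + 1) ∧
      ∀ B ∈ Bs, l'.countP (· ∈ B) ≤ l.countP (· ∈ B) - 1 := by
  by_cases hne : ∃ B ∈ Bs, ∃ v ∈ l, v ∈ B
  swap
  · have hzero : l.countP (∃ B ∈ Bs, · ∈ B) = 0 :=
      List.countP_eq_zero.2 (by simpa using fun v hv B hB hvB => hne ⟨B, hB, v, hv, hvB⟩)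
    exact ⟨[], List.nil_infix, by simp [hzero], by simp⟩
  obtain ⟨x, y, p, hpl, hind, hmeet⟩ := h.exists_inducedPath hl hne
  have hshort : l.countP (· ∈ p.support) ≤ m := by
    refine le_trans ?_ (p.length_support ▸ hm _ hind)
    rw [List.countP_eq_length_filter]
    exact ((hnodup.filter _).subperm fun v hv => by simpa using (List.mem_filter.1 hv).2).length_le
  obtain ⟨l', hl', havoid, hcount⟩ :=
    InducedPath.exists_infix_countP_lt (· ∈ p.support) (∃ B ∈ Bs, · ∈ B) l
  refine ⟨l', hl', hcount.trans_le (by gcongr), fun B hB => ?_⟩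
  by_cases hBl : ∃ v ∈ l, v ∈ B
  · obtain ⟨v, hvp, hvB⟩ := hmeet B hB hBl
    have hpos : 0 < l.countP (fun v => v ∈ p.support ∧ v ∈ B) :=
      List.countP_pos_iff.2 ⟨v, hpl hvp, by simpa using ⟨hvp, hvB⟩⟩
    have := countP_add_countP_le_of_infix (p := fun v => v ∈ p.support ∧ v ∈ B) (q := (· ∈ B))
      (r := (· ∈ B)) hl' (fun v hv hvp => havoid v hv hvp.1) (fun v => And.right) (fun v => id)
    omega
  · rw [List.countP_eq_zero.2 (by simpa using fun v hv hvB => hBl ⟨v, hl'.subset hv, hvB⟩)]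
    exact Nat.zero_le _

open scoped Classical in
theorem IsSeparating.countP_lt_pow (h : IsSeparating G Bs) {m : ℕ}
    (hm : ∀ m', Nonempty (pathGraph m' ↪g G) → m' ≤ m) {j : ℕ} {l : List V}
    (hl : l.IsChain G.Adj) (hnodup : l.Nodup) (hj : ∀ B ∈ Bs, l.countP (· ∈ B) ≤ j) :
    l.countP (∃ B ∈ Bs, · ∈ B) < (m + 1) ^ j := by
  induction j generalizing l with
  | zero =>
    have hzero {B} (hB : B ∈ Bs) := List.countP_eq_zero.1 (Nat.le_zero.1 (hj B hB))
    rw [List.countP_eq_zero.2 (by simpa using fun v hv B hB => by simpa using hzero hB v hv)]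
    simp
  | succ j ih =>
    obtain ⟨l', hl', hcount, hdrop⟩ := h.exists_infix_countP_lt hm hl hnodup
    calc l.countP (∃ B ∈ Bs, · ∈ B)
        < (m + 1) * (l'.countP (∃ B ∈ Bs, · ∈ B) + 1) := hcount
      _ ≤ (m + 1) * (m + 1) ^ j := by
        gcongr
        refine ih (hl.infix hl') (hnodup.sublist hl'.sublist) fun B hB => ?_
        have := hdrop B hB
        have := hj B hB
        omega
      _ = (m + 1) ^ (j + 1) := by ring

end Separation

section Biclique

theorem containsSubgraphCopy_iff_isContained {A B : Type*} {H : SimpleGraph A}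
    {G : SimpleGraph B} : ContainsSubgraphCopy H G ↔ H ⊑ G :=
  ⟨fun ⟨f, hf⟩ => ⟨⟨⟨f, fun {u v} => hf u v⟩, f.injective⟩⟩,
    fun ⟨f⟩ => ⟨f.toEmbedding, fun _ _ => f.toHom.map_adj⟩⟩

theorem pos_of_completeBipartiteGraph_free {V : Type*} {G : SimpleGraph V} {s : ℕ}
    (hfree : (completeBipartiteGraph (Fin s) (Fin s)).Free G) : 0 < s :=
  Nat.pos_of_ne_zero fun hs => hfree (by subst hs; exact IsContained.of_isEmpty)

theorem ncard_lt_or_ncard_lt_of_isCompleteBetween {V : Type*} [Finite V] {G : SimpleGraph V}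
    {A B : Set V} {s : ℕ} (hfree : (completeBipartiteGraph (Fin s) (Fin s)).Free G)
    (h : G.IsCompleteBetween A B) : A.ncard < s ∨ B.ncard < s := by
  classical
  by_contra! hlarge
  have := Fintype.ofFinite V
  simp only [Set.ncard_eq_toFinset_card'] at hlarge
  obtain ⟨left, hleft, hleft_card⟩ := Finset.exists_subset_card_eq hlarge.1
  obtain ⟨right, hright, hright_card⟩ := Finset.exists_subset_card_eq hlarge.2
  exact hfree <| completeBipartiteGraph_isContained_iff.2 ⟨left, right, by simpa, by simpa,
    fun _ hu _ hv => h (Set.mem_toFinset.1 (hleft hu)) (Set.mem_toFinset.1 (hright hv))⟩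

end Biclique

section CutCover

variable {V ι ι' : Type*} {G : SimpleGraph V} {s : ℕ} {S T : Set V} {lab : V → ι} {lab' : V → ι'}

/-- Vertices of `S` with the same label have the same neighbors outside `S`. -/
def CutHomogeneous (G : SimpleGraph V) (S : Set V) (lab : V → ι) : Prop :=
  ∀ ⦃x⦄, x ∈ S → ∀ ⦃x'⦄, x' ∈ S → lab x = lab x' → ∀ ⦃y⦄, y ∉ S → G.Adj x y → G.Adj x' y

/-- The vertices of `S` with label `i`. -/
def labelClass (S : Set V) (lab : V → ι) (i : ι) : Set V := {u ∈ S | lab u = i}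

/-- A vertex cover of the edges leaving `S`: the label classes with fewer than `s` vertices, and
the common neighbors outside `S` of each of the other label classes. -/
def cutCover (G : SimpleGraph V) (s : ℕ) (S : Set V) (lab : V → ι) : Set V :=
  {v | v ∈ S ∧ (labelClass S lab (lab v)).ncard < s} ∪
    {v | v ∉ S ∧ ∃ i, s ≤ (labelClass S lab i).ncard ∧ ∀ u ∈ labelClass S lab i, G.Adj u v}

theorem mem_cutCover_of_mem {v : V} (hv : v ∈ S) :
    v ∈ cutCover G s S lab ↔ (labelClass S lab (lab v)).ncard < s := by
  simp [cutCover, hv]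

theorem mem_cutCover_of_notMem {v : V} (hv : v ∉ S) : v ∈ cutCover G s S lab ↔
    ∃ i, s ≤ (labelClass S lab i).ncard ∧ ∀ u ∈ labelClass S lab i, G.Adj u v := by
  simp [cutCover, hv]

theorem ncard_cutCover_le [Finite V] [Fintype ι]
    (hfree : (completeBipartiteGraph (Fin s) (Fin s)).Free G) (S : Set V) (lab : V → ι) :
    (cutCover G s S lab).ncard ≤ Fintype.card ι * (s - 1) := by
  let part (i : ι) : Set V :=
    if (labelClass S lab i).ncard < s then labelClass S lab i
    else {v | v ∉ S ∧ ∀ u ∈ labelClass S lab i, G.Adj u v}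
  have hpart (i : ι) : (part i).ncard < s := by
    by_cases hi : (labelClass S lab i).ncard < s
    · simpa only [part, if_pos hi]
    · simp only [part, if_neg hi]
      exact (ncard_lt_or_ncard_lt_of_isCompleteBetween hfree
        fun u hu v (hv : v ∈ {v | v ∉ S ∧ ∀ u ∈ labelClass S lab i, G.Adj u v}) =>
          hv.2 u hu).resolve_left hi
  have hcover : cutCover G s S lab ⊆ ⋃ i ∈ Finset.univ, part i := by
    rintro v (⟨hv, hsmall⟩ | ⟨hv, i, hlarge, hadj⟩)
    · refine Set.mem_biUnion (Finset.mem_univ (lab v)) ?_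
      simpa only [part, if_pos hsmall] using ⟨hv, rfl⟩
    · refine Set.mem_biUnion (Finset.mem_univ i) ?_
      simpa only [part, if_neg hlarge.not_gt] using ⟨hv, hadj⟩
  calc (cutCover G s S lab).ncard
      ≤ (⋃ i ∈ Finset.univ, part i).ncard := Set.ncard_le_ncard hcover
    _ ≤ ∑ i : ι, (part i).ncard := Finset.set_ncard_biUnion_le _ _
    _ ≤ Fintype.card ι * (s - 1) :=
      Finset.sum_le_card_nsmul _ _ _ fun i _ => Nat.le_sub_one_of_lt (hpart i)

theorem CutHomogeneous.mem_cutCover_of_adj (h : CutHomogeneous G S lab) {x y : V} (hx : x ∈ S)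
    (hy : y ∉ S) (hxy : G.Adj x y) : x ∈ cutCover G s S lab ∨ y ∈ cutCover G s S lab := by
  rw [mem_cutCover_of_mem hx, mem_cutCover_of_notMem hy, or_iff_not_imp_left, not_lt]
  exact fun hlarge => ⟨lab x, hlarge, fun u hu => h hx hu.1 hu.2.symm hy hxy⟩

theorem CutHomogeneous.separates_cutCover (h : CutHomogeneous G S lab) (s : ℕ) :
    Separates G (Sᶜ ∪ cutCover G s S lab) (S ∪ cutCover G s S lab) (cutCover G s S lab) := by
  rintro a (haS | ha) c hc p
  · rcases hc with hcS | hc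
    · obtain ⟨d, hd, hfst, hsnd⟩ := p.exists_boundary_dart Sᶜ haS (not_not.2 hcS)
      rcases h.mem_cutCover_of_adj (s := s) (not_not.1 hsnd) hfst d.adj.symm with hmem | hmem
      · exact ⟨d.snd, p.dart_snd_mem_support_of_mem_darts hd, hmem⟩
      · exact ⟨d.fst, p.dart_fst_mem_support_of_mem_darts hd, hmem⟩
    · exact ⟨c, p.end_mem_support, hc⟩
  · exact ⟨a, p.start_mem_support, ha⟩

theorem labelClass_subset_labelClass {f : ι → ι'} (hST : S ⊆ T) (hf : S.EqOn lab' (f ∘ lab))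
    (i : ι) : labelClass S lab i ⊆ labelClass T lab' (f i) :=
  fun _ hu => ⟨hST hu.1, (hf hu.1).trans (congrArg f hu.2)⟩

theorem compl_union_cutCover_anti [Finite V] {f : ι → ι'} (hST : S ⊆ T)
    (hf : S.EqOn lab' (f ∘ lab)) :
    Tᶜ ∪ cutCover G s T lab' ⊆ Sᶜ ∪ cutCover G s S lab := by
  rintro v (hvT | hv)
  · exact .inl fun hvS => hvT (hST hvS)
  refine or_iff_not_imp_left.2 fun hvS => ?_
  rw [Set.notMem_compl_iff] at hvS
  rw [mem_cutCover_of_mem (hST hvS), hf hvS] at hv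
  exact (mem_cutCover_of_mem hvS).2 <|
    (Set.ncard_le_ncard (labelClass_subset_labelClass hST hf _)).trans_lt hv

theorem CutHomogeneous.union_cutCover_mono [Finite V] (h : CutHomogeneous G T lab') (hs : 0 < s)
    {f : ι → ι'} (hST : S ⊆ T) (hf : S.EqOn lab' (f ∘ lab)) :
    S ∪ cutCover G s S lab ⊆ T ∪ cutCover G s T lab' := by
  rintro v (hvS | hv)
  · exact .inl (hST hvS)
  refine or_iff_not_imp_left.2 fun hvT => ?_
  obtain ⟨i, hlarge, hadj⟩ := (mem_cutCover_of_notMem fun hvS => hvT (hST hvS)).1 hv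
  obtain ⟨u, hu⟩ := Set.nonempty_of_ncard_ne_zero (hs.trans_le hlarge).ne'
  have hclass := labelClass_subset_labelClass hST hf i
  exact (mem_cutCover_of_notMem hvT).2 ⟨f i, hlarge.trans (Set.ncard_le_ncard hclass),
    fun w hw => h (hclass hu).1 hw.1 ((hclass hu).2.trans hw.2.symm) hvT (hadj u hu)⟩

theorem CutHomogeneous.cutCover_subset_of_disjoint [Finite V] (h : CutHomogeneous G S lab)
    (hfree : (completeBipartiteGraph (Fin s) (Fin s)).Free G) (hST : Disjoint S T) :
    cutCover G s T lab' ⊆ Sᶜ ∪ cutCover G s S lab := by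
  refine fun v hv => or_iff_not_imp_left.2 fun hvS => ?_
  rw [Set.notMem_compl_iff] at hvS
  obtain ⟨j, hlarge, hadj⟩ := (mem_cutCover_of_notMem (hST.notMem_of_mem_left hvS)).1 hv
  have hcomplete : G.IsCompleteBetween (labelClass S lab (lab v)) (labelClass T lab' j) :=
    fun w hw u hu => h hvS hw.1 hw.2.symm (hST.notMem_of_mem_right hu.1) (hadj u hu).symm
  exact (mem_cutCover_of_mem hvS).2 <|
    (ncard_lt_or_ncard_lt_of_isCompleteBetween hfree hcomplete).resolve_right hlarge.not_gt

end CutCover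

section CliqueDecomposition

variable {V ι : Type*} {G : SimpleGraph V} {s : ℕ} {S T : Set V} {lab lab' : V → ι} {l : List V}
  {Bs : List (Set V)}

/-- The vertex set `S`, labeled by `lab`, is split by disjoint unions into single vertices in such a
way that labels are only merged when sets are united, and each set is cut-homogeneous. This keeps
the trace a cliquewidth expression of `G` leaves on the vertices of `G`. -/
inductive CliqueDecomposition (G : SimpleGraph V) : Set V → (V → ι) → Prop
  | singleton (v : V) (lab : V → ι) : CliqueDecomposition G {v} lab
  | union {S T : Set V} {lab lab' : V → ι} (f : ι → ι) (hdisj : Disjoint S T)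
      (hS : CliqueDecomposition G S lab) (hT : CliqueDecomposition G T lab)
      (hf : (S ∪ T).EqOn lab' (f ∘ lab)) (hhom : CutHomogeneous G (S ∪ T) lab') :
      CliqueDecomposition G (S ∪ T) lab'

theorem CliqueDecomposition.cutHomogeneous (h : CliqueDecomposition G S lab) :
    CutHomogeneous G S lab := by
  cases h with
  | singleton v =>
    rintro x rfl x' rfl - y -
    exact id
  | union _ _ _ _ _ hhom => exact hhom

open scoped Classical in
/-- A list of bags left behind by descending a decomposition of `S` along the path `l`. The bags
have bounded size, they separate each other and separate the outside of `S` in the way the bags of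
a path decomposition do, and they contain logarithmically many vertices of `l`. -/
structure IsBagSequence [Fintype ι] (G : SimpleGraph V) (s : ℕ) (S : Set V) (lab : V → ι)
    (l : List V) (Bs : List (Set V)) : Prop where
  ncard_le : ∀ B ∈ Bs, B.ncard ≤ 2 * (Fintype.card ι * (s - 1))
  subset : ∀ B ∈ Bs, B ⊆ S ∪ cutCover G s S lab
  isSeparating : IsSeparating G ((Sᶜ ∪ cutCover G s S lab) :: Bs)
  length_lt : l.length < 2 ^ (l.countP (∃ B ∈ Bs, · ∈ B) + 1)

theorem isBagSequence_nil_of_subsingleton [Fintype ι] (hS : S.Subsingleton) (hnodup : l.Nodup)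
    (hlS : ∀ v ∈ l, v ∈ S) : IsBagSequence G s S lab l [] where
  ncard_le := by simp
  subset := by simp
  isSeparating := fun A B C h => by simpa using h.length_le
  length_lt := by
    have hle : l.length ≤ 1 := by
      by_contra! h
      exact absurd (hS (hlS _ (l.getElem_mem (by omega : 0 < l.length))) (hlS _ (l.getElem_mem h)))
        (by simp [hnodup.getElem_inj_iff])
    exact hle.trans_lt (Nat.one_lt_two_pow (Nat.succ_ne_zero _))

theorem forall_mem_or_forall_mem_of_disjoint_cutCover (hhom : CutHomogeneous G S lab)
    (hl : l.IsChain G.Adj) (hlS : ∀ v ∈ l, v ∈ S ∪ T)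
    (havoid : ∀ v ∈ l, v ∉ cutCover G s S lab) : (∀ v ∈ l, v ∈ S) ∨ ∀ v ∈ l, v ∈ T := by
  by_contra! h
  obtain ⟨⟨x, hxl, hxS⟩, y, hyl, hyT⟩ := h
  obtain ⟨p, hp, -⟩ := exists_inducedPath_of_isChain hl hxl hyl
  have hyS : y ∈ S := (hlS y hyl).resolve_right hyT
  obtain ⟨v, hvp, hv⟩ := hhom.separates_cutCover s (.inl hxS) (.inl hyS) p
  exact havoid v (hp hvp) hv

open scoped Classical in
theorem IsBagSequence.union [Finite V] [Fintype ι] {B₀ : Set V} {l' : List V}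
    (hfree : (completeBipartiteGraph (Fin s) (Fin s)).Free G) {f : ι → ι} (hdisj : Disjoint S T)
    (hhom : CutHomogeneous G S lab) (hf : (S ∪ T).EqOn lab' (f ∘ lab))
    (hhom' : CutHomogeneous G (S ∪ T) lab') (hl' : l' <:+: l)
    (hB₀ : B₀ = cutCover G s S lab ∪ cutCover G s T lab) (havoid : ∀ v ∈ l', v ∉ B₀)
    (hcount : l.length < (l.countP (· ∈ B₀) + 1) * (l'.length + 1))
    (h : IsBagSequence G s S lab l' Bs) : IsBagSequence G s (S ∪ T) lab' l (B₀ :: Bs) := by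
  have hs := pos_of_completeBipartiteGraph_free hfree
  have hSU : S ⊆ S ∪ T := Set.subset_union_left
  have hTU : T ⊆ S ∪ T := Set.subset_union_right
  have hanti := compl_union_cutCover_anti (G := G) (s := s) hSU (hf.mono hSU)
  have hmonoS := hhom'.union_cutCover_mono hs hSU (hf.mono hSU)
  have hmonoT := hhom'.union_cutCover_mono hs hTU (hf.mono hTU)
  refine ⟨List.forall_mem_cons.2 ⟨?_, h.ncard_le⟩, List.forall_mem_cons.2 ⟨?_, fun B hB => ?_⟩,
    h.isSeparating.cons_cons hanti ?_ fun C hC => ?_, ?_⟩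
  · have hunion := Set.ncard_union_le (cutCover G s S lab) (cutCover G s T lab)
    have hS := ncard_cutCover_le hfree S lab
    have hT := ncard_cutCover_le hfree T lab
    rw [← hB₀] at hunion
    linarith
  · rw [hB₀]
    exact Set.union_subset (Set.subset_union_right.trans hmonoS)
      (Set.subset_union_right.trans hmonoT)
  · exact (h.subset B hB).trans hmonoS
  · rw [hB₀]
    exact Set.union_subset Set.subset_union_right (hhom.cutCover_subset_of_disjoint hfree hdisj)
  · exact (hhom.separates_cutCover s).mono hanti (h.subset C hC) (hB₀ ▸ Set.subset_union_left)
  · have hadd := countP_add_countP_le_of_infix (p := (· ∈ B₀)) (q := (∃ B ∈ Bs, · ∈ B))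
      (r := (∃ B ∈ B₀ :: Bs, · ∈ B)) hl' havoid (by simp +contextual) (by simp +contextual)
    calc l.length
        < (l.countP (· ∈ B₀) + 1) * (l'.length + 1) := hcount
      _ ≤ 2 ^ l.countP (· ∈ B₀) * 2 ^ (l'.countP (∃ B ∈ Bs, · ∈ B) + 1) :=
        Nat.mul_le_mul Nat.lt_two_pow_self h.length_lt
      _ = 2 ^ (l.countP (· ∈ B₀) + l'.countP (∃ B ∈ Bs, · ∈ B) + 1) := by ring
      _ ≤ 2 ^ (l.countP (∃ B ∈ B₀ :: Bs, · ∈ B) + 1) := by gcongr; norm_num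

theorem CliqueDecomposition.exists_isBagSequence [Finite V] [Fintype ι]
    (hfree : (completeBipartiteGraph (Fin s) (Fin s)).Free G) (h : CliqueDecomposition G S lab)
    (hl : l.IsChain G.Adj) (hnodup : l.Nodup) (hlS : ∀ v ∈ l, v ∈ S) :
    ∃ Bs, IsBagSequence G s S lab l Bs := by
  classical
  induction h generalizing l with
  | singleton v lab =>
    exact ⟨[], isBagSequence_nil_of_subsingleton Set.subsingleton_singleton hnodup hlS⟩
  | @union S T lab lab' f hdisj hS hT hf hhom ihS ihT =>
    obtain ⟨B₀, hB₀⟩ : ∃ B₀, B₀ = cutCover G s S lab ∪ cutCover G s T lab := ⟨_, rfl⟩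
    obtain ⟨l', hl', havoid, hcount⟩ := exists_infix_countP_lt (· ∈ B₀) (fun _ => True) l
    simp only [decide_true, List.countP_true] at hcount
    have hchain := hl.infix hl'
    have hnodup' := hnodup.sublist hl'.sublist
    rcases forall_mem_or_forall_mem_of_disjoint_cutCover (T := T) (s := s) hS.cutHomogeneous hchain
      (fun v hv => hlS v (hl'.subset hv)) (fun v hv hvC => havoid v hv (hB₀ ▸ .inl hvC))
      with hside | hside
    · obtain ⟨Bs, hBs⟩ := ihS hchain hnodup' hside
      exact ⟨_, hBs.union hfree hdisj hS.cutHomogeneous hf hhom hl' hB₀ havoid hcount⟩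
    · obtain ⟨Bs, hBs⟩ := ihT hchain hnodup' hside
      rw [Set.union_comm S T] at hf hhom ⊢
      rw [Set.union_comm] at hB₀
      exact ⟨_, hBs.union hfree hdisj.symm hT.cutHomogeneous hf hhom hl' hB₀ havoid hcount⟩

end CliqueDecomposition

section CliquewidthExpression

theorem CutHomogeneous.left_of_union {V ι ι' : Type*} {G : SimpleGraph V} {S T : Set V}
    {lab : V → ι} {lab' : V → ι'} {f : ι → ι'} (h : CutHomogeneous G (S ∪ T) lab')
    (hf : (S ∪ T).EqOn lab' (f ∘ lab)) (R : ι → ι → Prop)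
    (hcross : ∀ ⦃x⦄, x ∈ S → ∀ ⦃y⦄, y ∈ T → (G.Adj x y ↔ R (lab x) (lab y))) :
    CutHomogeneous G S lab := by
  intro x hx x' hx' hxx' y hyS hxy
  by_cases hyT : y ∈ T
  · rwa [hcross hx' hyT, ← hxx', ← hcross hx hyT]
  · have hlab : lab' x = lab' x' := by
      rw [hf (.inl hx), hf (.inl hx'), Function.comp, hxx', Function.comp]
    exact h (.inl hx) (.inl hx') hlab (not_or.2 ⟨hyS, hyT⟩) hxy

variable {V : Type*} {G : SimpleGraph V} {c : ℕ}

-- The operations above a subexpression `e` relabel its vertices by some `f` and add exactly the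
-- edges given by some relation `R` on labels; the induction carries `f` and `R` along.
theorem CliqueDecomposition.of_cwExpr (e : CWExpr c) (φ : e.verts ↪ V) {lab : V → Fin c}
    (f : Fin c → Fin c) (hlab : ∀ u, lab (φ u) = f (e.label u)) (R : Fin c → Fin c → Prop)
    (hadj : ∀ ⦃u v⦄, u ≠ v →
      (G.Adj (φ u) (φ v) ↔ (e.adj u v ∨ e.adj v u) ∨ R (e.label u) (e.label v)))
    (hhom : CutHomogeneous G (Set.range φ) lab) : CliqueDecomposition G (Set.range φ) lab := by
  induction e generalizing lab f R with
  | vertex i =>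
    have hrange : Set.range φ = {φ ()} := Set.range_unique (ι := Unit)
    exact hrange ▸ .singleton (φ ()) lab
  | addEdges i j hij e ih =>
    refine ih φ f hlab (fun a b => R a b ∨ (a = i ∧ b = j) ∨ (a = j ∧ b = i))
      (fun u v huv => (hadj huv).trans ?_) hhom
    simp only [CWExpr.adj, CWExpr.label]
    tauto
  | relabel g e ih =>
    exact ih φ (f ∘ g) hlab (fun a b => R (g a) (g b)) hadj hhom
  | union e₁ e₂ ih₁ ih₂ =>
    let φ₁ : e₁.verts ↪ V := Function.Embedding.inl.trans φ
    let φ₂ : e₂.verts ↪ V := Function.Embedding.inr.trans φ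
    let lab₀ : V → Fin c := Function.extend φ (CWExpr.union e₁ e₂).label lab
    have hlab₀ (u) : lab₀ (φ u) = (CWExpr.union e₁ e₂).label u := φ.injective.extend_apply _ _ u
    have hrange : Set.range φ = Set.range φ₁ ∪ Set.range φ₂ := Sum.range_eq φ
    have hf : (Set.range φ).EqOn lab (f ∘ lab₀) := by
      rintro _ ⟨u, rfl⟩
      rw [hlab u, Function.comp, hlab₀]
    have hdisj : Disjoint (Set.range φ₁) (Set.range φ₂) := by
      rw [Set.disjoint_left]
      rintro _ ⟨u, rfl⟩ ⟨v, hv⟩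
      exact Sum.inr_ne_inl (φ.injective hv)
    have hcross : ∀ ⦃x⦄, x ∈ Set.range φ₁ → ∀ ⦃y⦄, y ∈ Set.range φ₂ →
        (G.Adj x y ↔ R (lab₀ x) (lab₀ y)) := by
      rintro _ ⟨u, rfl⟩ _ ⟨v, rfl⟩
      rw [show lab₀ (φ₁ u) = e₁.label u from hlab₀ (.inl u),
        show lab₀ (φ₂ v) = e₂.label v from hlab₀ (.inr v)]
      exact (hadj Sum.inl_ne_inr).trans (by simp only [CWExpr.adj, CWExpr.label, or_self, false_or])
    rw [hrange] at hf hhom ⊢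
    have hhom₁ := hhom.left_of_union hf R hcross
    have hhom₂ := (Set.union_comm _ _ ▸ hhom).left_of_union (Set.union_comm _ _ ▸ hf) (flip R)
      fun y hy x hx => (G.adj_comm y x).trans (hcross hx hy)
    refine .union f hdisj (ih₁ φ₁ id (fun u => hlab₀ (.inl u)) R (fun u v huv => ?_) hhom₁)
      (ih₂ φ₂ id (fun u => hlab₀ (.inr u)) R (fun u v huv => ?_) hhom₂) hf hhom
    · exact hadj (Sum.inl_injective.ne huv)
    · exact hadj (Sum.inr_injective.ne huv)

theorem exists_cliqueDecomposition_univ (h : CliquewidthLE G c) :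
    ∃ lab : V → Fin c, CliqueDecomposition G Set.univ lab := by
  obtain ⟨e, ⟨iso⟩⟩ := h
  have hrange : Set.range iso.symm.toEquiv.toEmbedding = Set.univ := iso.symm.surjective.range_eq
  refine ⟨fun v => e.label (iso v), hrange ▸ .of_cwExpr e iso.symm.toEquiv.toEmbedding id
    (fun u => congrArg e.label (iso.apply_symm_apply u)) (fun _ _ => False) (fun u v huv => ?_)
    fun _ _ _ _ _ y hy => absurd (hrange ▸ Set.mem_univ y) hy⟩
  rw [or_false]
  exact iso.symm.map_adj_iff.trans ⟨And.right, And.intro huv⟩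

theorem finite_verts (e : CWExpr c) : Finite e.verts := by
  induction e with
  | vertex => exact inferInstanceAs (Finite Unit)
  | union e₁ e₂ => exact inferInstanceAs (Finite (e₁.verts ⊕ e₂.verts))
  | addEdges _ _ _ _ ih => exact ih
  | relabel _ _ ih => exact ih

theorem finite_of_cliquewidthLE (h : CliquewidthLE G c) : Finite V :=
  let ⟨e, ⟨iso⟩⟩ := h
  have := finite_verts e
  .of_equiv _ iso.symm.toEquiv

end CliquewidthExpression

section Bound

theorem order_lt_pow_of_cliqueDecomposition {V ι : Type*} [Finite V] [Fintype ι]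
    {G : SimpleGraph V} {lab : V → ι} {s m n : ℕ} (h : CliqueDecomposition G Set.univ lab)
    (hfree : (completeBipartiteGraph (Fin s) (Fin s)).Free G) (hpath : HasPathOfOrder G n)
    (hm : ∀ m', Nonempty (pathGraph m' ↪g G) → m' ≤ m) :
    n < 2 ^ (m + 1) ^ (2 * (Fintype.card ι * (s - 1))) := by
  classical
  obtain ⟨u, v, p, hp, rfl⟩ := hpath
  obtain ⟨Bs, hBs⟩ := h.exists_isBagSequence hfree p.isChain_adj_support hp.support_nodup (by simp)
  have hbags : ∀ B ∈ Bs, p.support.countP (· ∈ B) ≤ 2 * (Fintype.card ι * (s - 1)) :=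
    fun B hB => (countP_mem_le_ncard hp.support_nodup B.toFinite).trans (hBs.ncard_le B hB)
  calc p.length + 1
      = p.support.length := p.length_support.symm
    _ < 2 ^ (p.support.countP (∃ B ∈ Bs, · ∈ B) + 1) := hBs.length_lt
    _ ≤ 2 ^ (m + 1) ^ (2 * (Fintype.card ι * (s - 1))) := by
      gcongr
      · norm_num
      · exact (isSeparating_cons.1 hBs.isSeparating).1.countP_lt_pow hm p.isChain_adj_support
          hp.support_nodup hbags

theorem logb_natCast_rpow_one_div_le {b : ℝ} {n d : ℕ} (hb : 1 ≤ b) (h : n ≤ (2 : ℝ) ^ b ^ d) :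
    Real.logb 2 n ^ ((1 : ℝ) / d) ≤ b := by
  have hlog : Real.logb 2 n ≤ b ^ d := by
    rcases n.eq_zero_or_pos with rfl | hn
    · simpa using pow_nonneg (zero_le_one.trans hb) d
    · rw [Real.logb_le_iff_le_rpow one_lt_two (by exact_mod_cast hn)]
      exact_mod_cast h
  rcases eq_or_ne d 0 with rfl | hd
  · simpa
  · calc Real.logb 2 n ^ ((1 : ℝ) / d)
        ≤ (b ^ d) ^ ((1 : ℝ) / d) := by
          gcongr
          exact div_nonneg (Real.log_natCast_nonneg n) (Real.log_nonneg one_le_two)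
      _ = b := by rw [one_div, Real.pow_rpow_inv_natCast (by linarith) hd]

theorem quarter_mul_logb_rpow_le {k s m n : ℕ} (hk : 0 < k) (hs : 0 < s) (hm : 0 < m)
    (h : n < 2 ^ (m + 1) ^ (2 * ((k - 1) * (s - 1)))) :
    (1 / 4 : ℝ) * Real.logb 2 n ^ ((1 : ℝ) / (3 * ((k : ℝ) - 1) * ((s : ℝ) - 1))) ≤ m := by
  have hle : n ≤ 2 ^ (m + 1) ^ (3 * ((k - 1) * (s - 1))) :=
    h.le.trans (by gcongr <;> omega)
  have hexp : 3 * ((k : ℝ) - 1) * ((s : ℝ) - 1) = (3 * ((k - 1) * (s - 1)) : ℕ) := by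
    push_cast [Nat.cast_sub (Nat.one_le_iff_ne_zero.2 hk.ne'), Nat.cast_sub hs]
    ring
  have hm' : (1 : ℝ) ≤ m := by exact_mod_cast hm
  have hroot := logb_natCast_rpow_one_div_le (b := m + 1) (d := 3 * ((k - 1) * (s - 1)))
    (by linarith) (by exact_mod_cast hle)
  rw [hexp]
  linarith

end Bound

end InducedPath

open InducedPath in
theorem stmt5_general {V : Type*} {G : SimpleGraph V} {c s n : ℕ} (hcw : CliquewidthLE G c)
    (hss : ¬ ContainsSubgraphCopy (completeBipartiteGraph (Fin s) (Fin s)) G)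
    (hpath : HasPathOfOrder G n) :
    ∃ m, 0 < m ∧ n < 2 ^ (m + 1) ^ (2 * (c * (s - 1))) ∧ Nonempty (pathGraph m ↪g G) := by
  have := finite_of_cliquewidthLE hcw
  have : Nonempty V := ⟨hpath.choose⟩
  obtain ⟨lab, hdec⟩ := exists_cliqueDecomposition_univ hcw
  obtain ⟨m, hpos, hind, hmax⟩ := exists_max_inducedPath G
  have hlt := order_lt_pow_of_cliqueDecomposition hdec
    (fun hcopy => hss (containsSubgraphCopy_iff_isContained.2 hcopy)) hpath hmax
  exact ⟨m, hpos, by rwa [Fintype.card_fin] at hlt, hind⟩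

theorem stmt5 (k s : ℕ) (hk : 0 < k) (hs : 0 < s)
    {V : Type} [Fintype V] (G : SimpleGraph V) (n : ℕ)
    (hcw : CliquewidthLE G (k - 1))
    (hss : ¬ ContainsSubgraphCopy (completeBipartiteGraph (Fin s) (Fin s)) G)
    (hpath : HasPathOfOrder G n) :
    HasInducedPathGE G
      ((1 / 4 : ℝ) * Real.logb 2 n ^ ((1 : ℝ) / (3 * ((k : ℝ) - 1) * ((s : ℝ) - 1)))) := by
  obtain ⟨m, hm, hlt, hind⟩ := stmt5_general hcw hss hpath
  exact ⟨m, InducedPath.quarter_mul_logb_rpow_le hk hs hm hlt, hind⟩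
end

section
/- Let 𝒢 be a hereditary class of graphs that neither contains all complete graphs nor all complete bipartite graphs. If 𝒢 is well-quasi-ordered by the induced subgraph relation, then there is a constant d ∈ (0,1) such that every graph G ∈ 𝒢 that has a path of order n also has an induced path of order at least n^d. -/
open SimpleGraph Real

/-!
Let `G` be a graph of the class with a path `v 0, …, v (n - 1)` of order `n` and no induced path
of order more than `p`. Long holes form an antichain, and so do long double forks (paths with two
extra neighbours at each end), hence well-quasi-ordering bounds the length of both in `G`; by
Ramsey's theorem `G` contains no `K_{q,q}`, even as a non-induced subgraph. These three facts
alone give `n = O(p)`.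

Call `X` a set of hubs for a segment of the path if every vertex of `X` has a neighbour in every
subsegment of proportional length. If `X` is large, many disjoint subsegments join the vertices of
`X` to one another; since there are no long holes the connections may be taken small, since there
is no `K_{q,q}` some of them are anticomplete, and closing them up cyclically gives a long hole.
So the size of `X` is bounded, and one descends on this bound. If no set of `h + 1` vertices can
be hubs for a long segment but `X`, with `h` vertices, is, then every vertex outside `X` misses a
long subsegment. As a segment with more than `p + 1` vertices has a chord, it contains a vertex
with three neighbours, so a fork can be started in it, and its tip can be pushed step by step
towards subsegments which the current tip misses; a second fork in the last subsegment completes a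
long double fork, which is impossible. At `h = 0` this bounds the length of the path itself.
-/

namespace LongInducedPath

variable {V : Type*} {G : SimpleGraph V}

/-! ### Induced patterns -/

/-- The pattern described by `R`: the first `n` terms of `u` are distinct, and for `i < j < n` the
vertices `u i` and `u j` are adjacent if and only if `R i j`. Induced copies of paths, cycles and
forks are all encoded this way, so that they can be glued by arithmetic on the indices. -/
def Induces (G : SimpleGraph V) (R : ℕ → ℕ → Prop) (n : ℕ) (u : ℕ → V) : Prop :=
  ∀ ⦃i j⦄, i < j → j < n → u i ≠ u j ∧ (G.Adj (u i) (u j) ↔ R i j)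

/-- The edges `i < j` of the path `0, 1, 2, …`. -/
def pathRel (i j : ℕ) : Prop := i + 1 = j

/-- The edges `i < j` of the cycle `0, 1, …, n - 1`. -/
def cycleRel (n i j : ℕ) : Prop := i + 1 = j ∨ i = 0 ∧ j + 1 = n

/-- The graph on `Fin n` whose edges `i < j` are those with `R i j`. -/
def patternGraph (R : ℕ → ℕ → Prop) (n : ℕ) : SimpleGraph (Fin n) :=
  .fromRel fun i j => i < j ∧ R i j

theorem patternGraph_adj_of_lt {R : ℕ → ℕ → Prop} {n : ℕ} {i j : Fin n} (h : i < j) :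
    (patternGraph R n).Adj i j ↔ R i j := by
  simp only [patternGraph, fromRel_adj, h.ne, h, h.not_gt, ne_eq, not_false_eq_true, true_and,
    false_and, or_false]

theorem patternGraph_pathRel (n : ℕ) : patternGraph pathRel n = pathGraph n := by
  ext i j
  simp only [patternGraph, pathRel, fromRel_adj, pathGraph_adj, ne_eq, Fin.lt_def, Fin.ext_iff]
  omega

theorem patternGraph_cycleRel {n : ℕ} (hn : 3 ≤ n) :
    patternGraph (cycleRel n) n = cycleGraph n := by
  ext i j
  have := i.isLt
  have := j.isLt
  simp only [patternGraph, cycleRel, fromRel_adj, cycleGraph_adj', ne_eq, Fin.lt_def,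
    Fin.ext_iff, Fin.sub_def]
  rcases lt_trichotomy (i : ℕ) j with h | h | h
  · rw [Nat.mod_eq_of_lt (by omega), show n - (i : ℕ) + j = j - i + n by omega,
      Nat.add_mod_right, Nat.mod_eq_of_lt (by omega)]
    omega
  · rw [h, Nat.sub_add_cancel (by omega), Nat.mod_self]
    omega
  · rw [show n - (j : ℕ) + i = i - j + n by omega, Nat.add_mod_right,
      Nat.mod_eq_of_lt (by omega), Nat.mod_eq_of_lt (by omega)]
    omega

namespace Induces

variable {R : ℕ → ℕ → Prop} {n : ℕ} {u : ℕ → V}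

theorem mono (h : Induces G R n u) {m : ℕ} (hm : m ≤ n) : Induces G R m u :=
  fun _ _ hij hj => h hij (hj.trans_le hm)

theorem injOn (h : Induces G R n u) : Set.InjOn u (Set.Iio n) := by
  intro i hi j hj hij
  by_contra hne
  rcases lt_or_gt_of_ne hne with hlt | hlt
  · exact (h hlt hj).1 hij
  · exact (h hlt hi).1 hij.symm

theorem nonempty_embedding (h : Induces G R n u) : Nonempty (patternGraph R n ↪g G) := by
  refine ⟨⟨⟨fun i => u i, fun i j hij => Fin.ext (h.injOn i.2 j.2 hij)⟩, fun {i j} => ?_⟩⟩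
  rcases lt_trichotomy i j with hlt | rfl | hlt
  · exact (h hlt j.2).2.trans (patternGraph_adj_of_lt hlt).symm
  · simp only [SimpleGraph.irrefl]
  · exact (G.adj_comm _ _).trans <| (h hlt i.2).2.trans <|
      (patternGraph_adj_of_lt hlt).symm.trans (adj_comm _ _ _)

theorem append {n m : ℕ} {x y : ℕ → V} (hx : Induces G R n x)
    (hy : Induces G (fun i j => R (n + i) (n + j)) m y)
    (hxy : ∀ i < n, ∀ j < m, x i ≠ y j ∧ (G.Adj (x i) (y j) ↔ R i (n + j))) :
    Induces G R (n + m) (fun i => if i < n then x i else y (i - n)) := by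
  intro i j hij hj
  by_cases hjn : j < n
  · simpa only [hjn, hij.trans hjn, if_true] using hx hij hjn
  obtain ⟨j, rfl⟩ := Nat.exists_eq_add_of_le (not_lt.1 hjn)
  by_cases hin : i < n
  · simpa only [hin, hjn, if_true, if_false, Nat.add_sub_cancel_left] using
      hxy i hin j (by omega)
  obtain ⟨i, rfl⟩ := Nat.exists_eq_add_of_le (not_lt.1 hin)
  simpa only [hin, hjn, if_false, Nat.add_sub_cancel_left] using
    hy (i := i) (j := j) (by omega) (by omega)

theorem cons {y : V} (hu : Induces G (fun i j => R (i + 1) (j + 1)) n u)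
    (hy : ∀ i < n, y ≠ u i ∧ (G.Adj y (u i) ↔ R 0 (i + 1))) :
    Induces G R (n + 1) (fun | 0 => y | i + 1 => u i)
  | 0, j + 1, _, hj => hy j (by omega)
  | i + 1, j + 1, hij, hj => hu (by omega) (by omega)

end Induces

theorem induces_getVert_of_length_eq_dist {u v : V} (p : G.Walk u v) (hp : p.length = G.dist u v) :
    Induces G pathRel (p.length + 1) p.getVert := by
  intro i j hij hj
  have hinj := (p.isPath_of_length_eq_dist hp).getVert_injOn
  refine ⟨fun h => hij.ne (hinj (by simp only [Set.mem_ofPred_eq]; omega)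
    (by simp only [Set.mem_ofPred_eq]; omega) h), fun h => ?_, ?_⟩
  · have := dist_le ((p.take i).append (Walk.cons h (p.drop j)))
    rw [Walk.length_append, Walk.length_cons, Walk.take_length, Walk.drop_length] at this
    simp only [pathRel]
    omega
  · rintro rfl
    exact p.adj_getVert_succ (by omega)

theorem exists_induces_path {S : Set V} (hS : (G.induce S).Preconnected) {a b : V} (ha : a ∈ S)
    (hb : b ∈ S) :
    ∃ k u, Induces G pathRel (k + 1) u ∧ u 0 = a ∧ u k = b ∧ ∀ i, u i ∈ S := by
  obtain ⟨p, hp⟩ := (hS ⟨a, ha⟩ ⟨b, hb⟩).exists_walk_length_eq_dist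
  refine ⟨p.length, fun i => p.getVert i, fun i j hij hj => ?_, by simp, by simp,
    fun i => (p.getVert i).2⟩
  simpa [Subtype.ext_iff] using induces_getVert_of_length_eq_dist p hp hij hj

/-! ### Induced paths and holes -/

/-- The vertex `x` has a neighbour in the set `S`. -/
def Touches (G : SimpleGraph V) (x : V) (S : Set V) : Prop := ∃ y ∈ S, G.Adj x y

theorem Touches.mono {x : V} {S T : Set V} (h : Touches G x S) (hST : S ⊆ T) : Touches G x T :=
  let ⟨y, hy, hxy⟩ := h
  ⟨y, hST hy, hxy⟩

theorem preconnected_induce_insert {S : Set V} (hS : (G.induce S).Preconnected) {x : V}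
    (hx : Touches G x S) : (G.induce (insert x S)).Preconnected := by
  obtain ⟨y, hy, hxy⟩ := hx
  rw [← Set.singleton_union]
  exact (connected_induce_union (s := {x}) .of_subsingleton hS rfl hy hxy).preconnected

theorem preconnected_image_Ico {w : ℕ → V} {a b : ℕ}
    (hw : ∀ i, i + 1 < b → G.Adj (w i) (w (i + 1))) :
    (G.induce (w '' Set.Ico a b)).Preconnected := by
  induction b with
  | zero => simp [Preconnected]
  | succ b ih =>
    rcases lt_trichotomy a b with hab | rfl | hab
    · obtain ⟨c, rfl⟩ : ∃ c, b = c + 1 := ⟨b - 1, by omega⟩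
      rw [← Set.insert_Ico_right_eq_Ico_add_one hab.le, Set.image_insert_eq]
      exact preconnected_induce_insert (ih fun i hi => hw i (by omega))
        ⟨w c, ⟨c, ⟨by omega, by omega⟩, rfl⟩, (hw c (by omega)).symm⟩
    · rw [Set.Ico_add_one_right_eq_Icc, Set.Icc_self, Set.image_singleton]
      exact .of_subsingleton
    · simp [Set.Ico_eq_empty (show ¬ a < b + 1 by omega), Preconnected]

theorem Induces.preconnected_image_Ico {n : ℕ} {w : ℕ → V} (hw : Induces G pathRel n w) {a b : ℕ}
    (hb : b ≤ n) : (G.induce (w '' Set.Ico a b)).Preconnected :=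
  LongInducedPath.preconnected_image_Ico fun _ hi => (hw (Nat.lt_succ_self _) (by omega)).2.2 rfl

theorem exists_induces_path_through {R : Set V} (hR : (G.induce R).Preconnected) {a b : V}
    (hab : a ≠ b) (hadj : ¬ G.Adj a b) (ha : Touches G a R) (hb : Touches G b R) :
    ∃ k u, Induces G pathRel (k + 3) u ∧ u 0 = a ∧ u (k + 2) = b ∧
      ∀ i, 0 < i → i < k + 2 → u i ∈ R := by
  have hconn := preconnected_induce_insert (preconnected_induce_insert hR hb)
    (ha.mono (Set.subset_insert b R))
  obtain ⟨k, u, hu, h0, hk, hmem⟩ := exists_induces_path hconn (Set.mem_insert a _)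
    (Set.mem_insert_of_mem a (Set.mem_insert b R))
  match k with
  | 0 => exact absurd (h0.symm.trans hk) hab
  | 1 => exact absurd ((hu zero_lt_one one_lt_two).2.2 rfl) (h0 ▸ hk ▸ hadj)
  | k + 2 =>
    refine ⟨k, u, hu, h0, hk, fun i hi hik => ((hmem i).resolve_left ?_).resolve_left ?_⟩
    · exact h0 ▸ (hu hi (by omega)).1.symm
    · exact hk ▸ (hu hik (by omega)).1

theorem exists_cycleGraph_embedding {k : ℕ} (hk : 2 ≤ k) {w : ℕ → V}
    (hw : Induces G pathRel (k + 1) w) {R : Set V} (hR : (G.induce R).Preconnected)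
    (hwR : ∀ i ≤ k, w i ∉ R) (h0 : Touches G (w 0) R) (hkR : Touches G (w k) R)
    (hn : ∀ i, 0 < i → i < k → ¬ Touches G (w i) R) :
    ∃ n, k < n ∧ Nonempty (cycleGraph n ↪g G) := by
  obtain ⟨l, u, hu, hu0, hul, huR⟩ := exists_induces_path_through hR
    (hw (by omega : 0 < k) (by omega)).1.symm
    (fun h => absurd ((hw (by omega : 0 < k) (by omega)).2.1 h.symm) (by
      simp only [pathRel]; omega)) hkR h0
  refine ⟨k + 1 + (l + 1), by omega, patternGraph_cycleRel (n := k + 1 + (l + 1)) (by omega) ▸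
    Induces.nonempty_embedding (Induces.append (x := w) (y := fun i => u (i + 1))
      (fun i j hij hj => ?_) (fun i j hij hj => ?_) (fun i hi j hj => ?_))⟩
  · rw [(hw hij hj).2]
    exact ⟨(hw hij hj).1, by simp only [pathRel, cycleRel]; omega⟩
  · have := hu (Nat.succ_lt_succ hij) (by omega)
    exact ⟨this.1, this.2.trans (by simp only [pathRel, cycleRel]; omega)⟩
  · have hmem : u (j + 1) ∈ R := huR _ (by omega) (by omega)
    refine ⟨fun h => hwR i (by omega) (h ▸ hmem), ?_⟩
    rcases Nat.eq_zero_or_pos i with rfl | hi0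
    · rw [← hul, G.adj_comm, (hu (by omega) (by omega)).2]
      simp only [pathRel, cycleRel, true_and]
      omega
    rcases eq_or_ne i k with rfl | hik
    · rw [← hu0, (hu (by omega) (by omega)).2]
      simp only [pathRel, cycleRel]
      omega
    · refine iff_of_false (fun h => hn i hi0 (by omega) ⟨_, hmem, h⟩) ?_
      simp only [cycleRel]
      omega

/-- No cycle of length at least `L` is an induced subgraph of `G`. -/
def NoLongHole (G : SimpleGraph V) (L : ℕ) : Prop := ∀ n, L ≤ n → IsEmpty (cycleGraph n ↪g G)

theorem NoLongHole.exists_touches_lt {L : ℕ} (hL : 2 ≤ L) (hG : NoLongHole G L) {k : ℕ} {w : ℕ → V}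
    (hw : Induces G pathRel (k + 1) w) {R : Set V} (hR : (G.induce R).Preconnected)
    (hwR : ∀ i ≤ k, w i ∉ R) (h0 : Touches G (w 0) R)
    (h1 : ∃ j, 0 < j ∧ j ≤ k ∧ Touches G (w j) R) :
    ∃ j, 0 < j ∧ j ≤ k ∧ j < L ∧ Touches G (w j) R := by
  classical
  obtain ⟨hpos, hle, htouch⟩ := Nat.find_spec h1
  refine ⟨Nat.find h1, hpos, hle, ?_, htouch⟩
  by_contra! hlt
  obtain ⟨n, hn, hcyc⟩ := exists_cycleGraph_embedding (hL.trans hlt) (hw.mono (by omega)) hR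
    (fun i hi => hwR i (hi.trans hle)) h0 htouch
    (fun i hi hij ht => Nat.find_min h1 hij ⟨hi, by omega, ht⟩)
  exact not_isEmpty_iff.2 hcyc (hG n (by omega))

theorem exists_preconnected_disjoint {D I Z : Set V} (hD : (G.induce D).Preconnected) (hID : I ⊆ D)
    (hne : I.Nonempty) (hI : (G.induce I).Preconnected) (hIZ : Disjoint I Z)
    (hDZ : (D ∩ Z).Nonempty) :
    ∃ E, I ⊆ E ∧ E ⊆ D ∧ (G.induce E).Preconnected ∧ Disjoint E Z ∧
      ∃ z ∈ D ∩ Z, Touches G z E := by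
  obtain ⟨a, ha⟩ := hne
  obtain ⟨b, hbD, hbZ⟩ := hDZ
  -- The union of `𝒞` is the component of `D \ Z` containing `I`.
  let 𝒞 : Set (Set V) := {C | I ⊆ C ∧ C ⊆ D ∧ (G.induce C).Connected ∧ Disjoint C Z}
  have hI𝒞 : I ∈ 𝒞 := ⟨subset_rfl, hID, (connected_iff _).2 ⟨hI, ⟨a, ha⟩⟩, hIZ⟩
  have hIE : I ⊆ ⋃₀ 𝒞 := Set.subset_sUnion_of_mem hI𝒞
  have hE : (G.induce (⋃₀ 𝒞)).Preconnected :=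
    (induce_sUnion_connected_of_pairwise_not_disjoint ⟨I, hI𝒞⟩
      (fun hs ht => ⟨a, hs.1 ha, ht.1 ha⟩) (fun hs => hs.2.2.1)).preconnected
  have hED : ⋃₀ 𝒞 ⊆ D := Set.sUnion_subset fun C hC => hC.2.1
  have hEZ : Disjoint (⋃₀ 𝒞) Z := Set.disjoint_sUnion_left.2 fun C hC => hC.2.2.2
  refine ⟨⋃₀ 𝒞, hIE, hED, hE, hEZ, ?_⟩
  obtain ⟨p⟩ := hD ⟨a, hID ha⟩ ⟨b, hbD⟩
  obtain ⟨d, -, hfst, hsnd⟩ := p.exists_boundary_dart {x | (x : V) ∈ ⋃₀ 𝒞} (hIE ha)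
    (fun h => hEZ.notMem_of_mem_left h hbZ)
  have htouch : Touches G d.snd (⋃₀ 𝒞) := ⟨d.fst, hfst, d.adj.symm⟩
  refine ⟨d.snd, ⟨d.snd.2, by_contra fun hZ => hsnd ?_⟩, htouch⟩
  refine Set.mem_sUnion.2 ⟨insert ↑d.snd (⋃₀ 𝒞), ⟨hIE.trans (Set.subset_insert _ _),
    Set.insert_subset d.snd.2 hED, (connected_iff _).2 ⟨preconnected_induce_insert hE htouch,
    ⟨a, Or.inr (hIE ha)⟩⟩, Set.disjoint_insert_left.2 ⟨hZ, hEZ⟩⟩, Set.mem_insert _ _⟩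

/-! ### Forks and tripods -/

/-- The edges `i < j` of a fork: the path `0, 1, …, t` together with two further neighbours
`t + 1` and `t + 2` of `t`, which are adjacent to each other if and only if `p`. -/
def forkRel (t : ℕ) (p : Prop) (i j : ℕ) : Prop :=
  i + 1 = j ∧ j ≤ t + 1 ∨ i = t ∧ j = t + 2 ∨ i = t + 1 ∧ j = t + 2 ∧ p

/-- The edges `i < j` of a double fork: the path `2, 3, …, k + 2` together with two further
neighbours `0, 1` of `2`, adjacent if and only if `p`, and two further neighbours `k + 3, k + 4`
of `k + 2`, adjacent if and only if `q`. -/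
def doubleForkRel (p q : Prop) (k i j : ℕ) : Prop :=
  i = 0 ∧ j = 1 ∧ p ∨ i = 0 ∧ j = 2 ∨ 1 ≤ i ∧ i + 1 = j ∧ j ≤ k + 3 ∨ i = k + 2 ∧ j = k + 4 ∨
    i = k + 3 ∧ j = k + 4 ∧ q

/-- Some double fork with `k + 1` vertices on its central path is an induced subgraph of `G`. -/
def HasDoubleFork (G : SimpleGraph V) (k : ℕ) : Prop :=
  ∃ p q u, Induces G (doubleForkRel p q k) (k + 5) u

theorem Induces.cons_fork {t : ℕ} {p : Prop} {x : ℕ → V} (hx : Induces G (forkRel t p) (t + 3) x)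
    {v : V} (hv : ∀ i < t + 3, v ≠ x i) (h0 : G.Adj v (x 0))
    (hadj : ∀ i, 0 < i → i < t + 3 → ¬ G.Adj v (x i)) :
    Induces G (forkRel (t + 1) p) (t + 4) (fun | 0 => v | i + 1 => x i) := by
  refine Induces.cons (fun i j hij hj => ⟨(hx hij hj).1, (hx hij hj).2.trans ?_⟩)
    (fun i hi => ⟨hv i hi, ?_⟩)
  · grind [forkRel]
  · rcases Nat.eq_zero_or_pos i with rfl | hi0
    · exact iff_of_true h0 (Or.inl ⟨rfl, by omega⟩)
    · exact iff_of_false (hadj i hi0 hi) (by simp only [forkRel]; omega)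

/-- The vertex `v` is the tip of an induced fork whose other vertices lie in `S`. -/
def StartsFork (G : SimpleGraph V) (v : V) (S : Set V) : Prop :=
  ∃ t p x, Induces G (forkRel t p) (t + 3) x ∧ x 0 = v ∧ ∀ i, 0 < i → i < t + 3 → x i ∈ S

namespace StartsFork

theorem mono {v : V} {S T : Set V} (h : StartsFork G v S) (hST : S ⊆ T) : StartsFork G v T :=
  let ⟨t, p, x, hx, h0, hS⟩ := h
  ⟨t, p, x, hx, h0, fun i hi hit => hST (hS i hi hit)⟩

theorem of_adj {v a b : V} (hab : a ≠ b) (ha : G.Adj v a) (hb : G.Adj v b) :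
    StartsFork G v {a, b} := by
  refine ⟨0, G.Adj a b, fun | 0 => v | 1 => a | _ => b, fun i j hij hj => ?_, rfl, ?_⟩
  · obtain ⟨rfl, rfl⟩ | ⟨rfl, rfl⟩ | ⟨rfl, rfl⟩ :
      i = 0 ∧ j = 1 ∨ i = 0 ∧ j = 2 ∨ i = 1 ∧ j = 2 := by omega
    · simp [forkRel, ha, ha.ne]
    · simp [forkRel, hb, hb.ne]
    · simp [forkRel, hab]
  · intro i hi hi3
    obtain rfl | rfl : i = 1 ∨ i = 2 := by omega
    · exact Or.inl rfl
    · exact Or.inr rfl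

theorem cons {v s : V} {S : Set V} (h : StartsFork G s S) (hvs : G.Adj v s) (hv : v ∉ S)
    (hS : ∀ y ∈ S, ¬ G.Adj v y) : StartsFork G v (insert s S) := by
  obtain ⟨t, p, x, hx, rfl, hxS⟩ := h
  refine ⟨t + 1, p, _, hx.cons_fork (v := v) (fun i hi => ?_) hvs
    (fun i hi hit => hS _ (hxS i hi hit)), rfl, fun i hi hit => ?_⟩
  · rcases Nat.eq_zero_or_pos i with rfl | hi0
    · exact hvs.ne
    · exact fun h => hv (h ▸ hxS i hi0 hi)
  · obtain ⟨i, rfl⟩ := Nat.exists_eq_add_of_lt hi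
    rcases Nat.eq_zero_or_pos i with rfl | hi0
    · exact Set.mem_insert _ _
    · exact Set.mem_insert_of_mem _ (by simpa using hxS i hi0 (by omega))

end StartsFork

/-- `Y` consists of a vertex and three of its neighbours (which may be adjacent to one another). -/
def IsTripod (G : SimpleGraph V) (Y : Set V) : Prop :=
  ∃ (c : V) (N : Finset V), N.card = 3 ∧ (∀ x ∈ N, G.Adj c x) ∧ Y = insert c ↑N

namespace IsTripod

variable {Y : Set V}

theorem nonempty (hY : IsTripod G Y) : Y.Nonempty := by
  obtain ⟨c, N, -, -, rfl⟩ := hY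
  exact Set.insert_nonempty c _

theorem ncard_eq (hY : IsTripod G Y) : Y.ncard = 4 := by
  obtain ⟨c, N, hN, hc, rfl⟩ := hY
  rw [Set.ncard_insert_of_notMem fun h => (hc c h).ne rfl, Set.ncard_coe_finset, hN]

theorem finite (hY : IsTripod G Y) : Y.Finite := by
  obtain ⟨c, N, -, -, rfl⟩ := hY
  exact N.finite_toSet.insert c

theorem preconnected (hY : IsTripod G Y) : (G.induce Y).Preconnected := by
  obtain ⟨c, N, -, hc, rfl⟩ := hY
  refine (induce_connected_of_patches c (Set.mem_insert c _) fun {v} hv => ?_).preconnected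
  rcases hv with rfl | hv
  · exact ⟨_, subset_rfl, Set.mem_insert _ _, Set.mem_insert _ _, .refl _⟩
  · exact ⟨{c, v}, Set.insert_subset_insert (Set.singleton_subset_iff.2 hv), Or.inl rfl,
      Or.inr rfl, (induce_pair_connected_of_adj (hc v hv)).preconnected _ _⟩

theorem startsFork_of_mem {c s : V} {N : Finset V} (hN : N.card = 3) (hc : ∀ x ∈ N, G.Adj c x)
    (hs : s ∈ insert c (N : Set V)) {v : V} (hv : v ∉ insert c (N : Set V)) (hvs : G.Adj v s)
    (huniq : ∀ y ∈ insert c (N : Set V), y ≠ s → ¬ G.Adj v y) :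
    StartsFork G v (insert c ↑N) := by
  classical
  have hcN : c ∉ N := fun h => (hc c h).ne rfl
  suffices ∃ S, s ∉ S ∧ S ⊆ insert c (N : Set V) ∧ StartsFork G s S by
    obtain ⟨S, hsS, hSY, hS⟩ := this
    exact (hS.cons hvs (fun h => hv (hSY h))
      (fun y hy => huniq y (hSY hy) (fun h => hsS (h ▸ hy)))).mono (Set.insert_subset hs hSY)
  rcases hs with rfl | hs
  · obtain ⟨a, ha, b, hb, hab⟩ := Finset.one_lt_card.1 (by omega : 1 < N.card)
    exact ⟨{a, b}, by rintro (rfl | rfl) <;> exact hcN ‹_›,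
      by rintro x (rfl | rfl) <;> exact Or.inr ‹_›, .of_adj hab (hc a ha) (hc b hb)⟩
  by_cases hadj : ∃ a ∈ N, G.Adj s a
  · obtain ⟨a, ha, hsa⟩ := hadj
    exact ⟨{c, a}, by rintro (rfl | rfl); exacts [hcN hs, hsa.ne rfl],
      by rintro x (rfl | rfl); exacts [Or.inl rfl, Or.inr ha],
      .of_adj (hc a ha).ne (hc s hs).symm hsa⟩
  push Not at hadj
  obtain ⟨a, ha, b, hb, hab⟩ := Finset.one_lt_card.1
    (by rw [Finset.card_erase_of_mem hs]; omega : 1 < (N.erase s).card)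
  obtain ⟨has, haN⟩ := Finset.mem_erase.1 ha
  obtain ⟨hbs, hbN⟩ := Finset.mem_erase.1 hb
  refine ⟨{c, a, b}, by rintro (rfl | rfl | rfl) <;> simp_all,
    by rintro x (rfl | rfl | rfl) <;> simp_all,
    (StartsFork.of_adj hab (hc a haN) (hc b hbN)).cons (hc s hs).symm
      (by rintro (rfl | rfl) <;> simp_all) (by rintro y (rfl | rfl) <;> simp_all)⟩

theorem startsFork (hY : IsTripod G Y) {v : V} (hv : v ∉ Y) (ht : Touches G v Y) :
    StartsFork G v Y := by
  obtain ⟨s, hs, hvs⟩ := ht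
  by_cases h : ∃ y ∈ Y, y ≠ s ∧ G.Adj v y
  · obtain ⟨y, hy, hys, hvy⟩ := h
    exact (StartsFork.of_adj hys hvy hvs).mono (Set.pair_subset hy hs)
  · push Not at h
    obtain ⟨c, N, hN, hc, rfl⟩ := hY
    exact startsFork_of_mem hN hc hs hv hvs h

theorem startsFork_of_subset (hY : IsTripod G Y) {D : Set V} (hfin : D.Finite)
    (hD : (G.induce D).Preconnected) (hYD : Y ⊆ D) {v : V} (hv : v ∉ D) (ht : Touches G v D) :
    StartsFork G v D := by
  induction hn : D.ncard using Nat.strong_induction_on generalizing D v with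
  | _ n ih =>
    by_cases hvY : Touches G v Y
    · exact (hY.startsFork (fun h => hv (hYD h)) hvY).mono hYD
    obtain ⟨E, hYE, hED, hE, hEv, z, ⟨hzD, hvz⟩, hzE⟩ :=
      exists_preconnected_disjoint (Z := {x | G.Adj v x}) hD hYD hY.nonempty hY.preconnected
        (Set.disjoint_left.2 fun x hx h => hvY ⟨x, hx, h⟩) ht
    have hzE' : z ∉ E := fun h => hEv.notMem_of_mem_left h hvz
    have hfork := ih E.ncard (hn ▸ Set.ncard_lt_ncard ⟨hED, fun h => hzE' (h hzD)⟩ hfin)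
      (hfin.subset hED) hE hYE hzE' hzE rfl
    exact (hfork.cons hvz (fun h => hv (hED h)) fun y hy => hEv.notMem_of_mem_left hy).mono
      (Set.insert_subset hzD hED)

end IsTripod

/-- An induced fork `x` whose tip `x 0`, and no other vertex of which, touches the connected
set `D`. -/
structure ForkedTail (G : SimpleGraph V) (t : ℕ) (p : Prop) (x : ℕ → V) (D : Set V) : Prop where
  induces : Induces G (forkRel t p) (t + 3) x
  preconnected : (G.induce D).Preconnected
  notMem : ∀ i < t + 3, x i ∉ D
  touches : Touches G (x 0) D
  not_touches : ∀ i, 0 < i → i < t + 3 → ¬ Touches G (x i) D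

theorem IsTripod.exists_forkedTail {D I Y : Set V} (hY : IsTripod G Y)
    (hD : (G.induce D).Preconnected) (hYD : Y ⊆ D) (hID : I ⊆ D) (hne : I.Nonempty)
    (hI : (G.induce I).Preconnected) (hYI : Disjoint I Y) (hYt : ∀ y ∈ Y, ¬ Touches G y I) :
    ∃ t p x E, ForkedTail G t p x E ∧ I ⊆ E ∧ E ⊆ D ∧ x 0 ∈ D := by
  obtain ⟨E, hIE, hED, hE, hEY, v, ⟨hvD, hvY⟩, hvE⟩ :=
    exists_preconnected_disjoint (Z := Y ∪ {u | Touches G u Y}) hD hID hne hI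
      (Set.disjoint_union_right.2 ⟨hYI, Set.disjoint_left.2 fun u hu ⟨y, hy, huy⟩ =>
        hYt y hy ⟨u, hu, huy.symm⟩⟩)
      (hY.nonempty.mono fun y hy => ⟨hYD hy, Or.inl hy⟩)
  obtain ⟨hEY, hEt⟩ := Set.disjoint_union_right.1 hEY
  have hYE : ∀ y ∈ Y, ¬ Touches G y E := fun y hy ⟨u, hu, hyu⟩ =>
    hEt.notMem_of_mem_left hu ⟨y, hy, hyu.symm⟩
  have hvY' : v ∉ Y := fun h => hYE v h hvE
  have hvt : Touches G v Y := hvY.resolve_left hvY'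
  obtain ⟨t, p, x, hx, rfl, hxY⟩ := hY.startsFork hvY' hvt
  refine ⟨t, p, x, E, ⟨hx, hE, fun i hi => ?_, hvE, fun i hi hit => hYE _ (hxY i hi hit)⟩,
    hIE, hED, hvD⟩
  rcases Nat.eq_zero_or_pos i with rfl | hi0
  · exact fun h => hEt.notMem_of_mem_left h hvt
  · exact hEY.notMem_of_mem_right (hxY i hi0 hi)

namespace ForkedTail

variable {t : ℕ} {p : Prop} {x : ℕ → V} {D : Set V}

theorem extend (hx : ForkedTail G t p x D) {I : Set V} (hID : I ⊆ D) (hne : I.Nonempty)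
    (hI : (G.induce I).Preconnected) (hxI : ¬ Touches G (x 0) I) :
    ∃ y E, ForkedTail G (t + 1) p y E ∧ I ⊆ E ∧ E ⊆ D ∧ y 0 ∈ D := by
  obtain ⟨E, hIE, hED, hE, hEx, z, ⟨hzD, hxz⟩, hzE⟩ :=
    exists_preconnected_disjoint (Z := {y | G.Adj (x 0) y}) hx.preconnected hID hne hI
      (Set.disjoint_left.2 fun y hy h => hxI ⟨y, hy, h⟩) hx.touches
  refine ⟨fun | 0 => z | i + 1 => x i, E, ⟨hx.induces.cons_fork ?_ hxz.symm ?_, hE, ?_, hzE, ?_⟩,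
    hIE, hED, hzD⟩
  · exact fun i hi h => hx.notMem i hi (h ▸ hzD)
  · exact fun i hi hit h => hx.not_touches i hi hit ⟨z, hzD, h.symm⟩
  · rintro (_ | i) hi
    · exact fun h => hEx.notMem_of_mem_left h hxz
    · exact fun h => hx.notMem i (by omega) (hED h)
  · rintro (_ | _ | i) hi hit
    · exact absurd hi (lt_irrefl 0)
    · exact fun ⟨y, hy, hxy⟩ => hEx.notMem_of_mem_left hy hxy
    · exact fun h => hx.not_touches (i + 1) (by omega) (by omega) (h.mono hED)

theorem exists_hasDoubleFork (hx : ForkedTail G t p x D) (hfin : D.Finite) {Y : Set V}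
    (hY : IsTripod G Y) (hYD : Y ⊆ D) : ∃ k, t ≤ k ∧ HasDoubleFork G k := by
  obtain ⟨t', q, y, hy, hy0, hyD⟩ := hY.startsFork_of_subset hfin hx.preconnected hYD
    (hx.notMem 0 (by omega)) hx.touches
  have hglue : Induces G (doubleForkRel p q (t + t')) (t + 3 + (t' + 2))
      (fun i => if i < t + 3 then x (t + 2 - i) else y (i - (t + 3) + 1)) := by
    refine Induces.append (x := fun i => x (t + 2 - i)) (y := fun i => y (i + 1))
      (fun i j hij hj => ?_) (fun i j hij hj => ?_) (fun i hi j hj => ?_)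
    · obtain ⟨hne, hadj⟩ := hx.induces (i := t + 2 - j) (j := t + 2 - i) (by omega) (by omega)
      refine ⟨hne.symm, (G.adj_comm _ _).trans (hadj.trans ?_)⟩
      grind [forkRel, doubleForkRel]
    · obtain ⟨hne, hadj⟩ := hy (i := i + 1) (j := j + 1) (by omega) (by omega)
      refine ⟨hne, hadj.trans ?_⟩
      grind [forkRel, doubleForkRel]
    · have hmem : y (j + 1) ∈ D := hyD _ (by omega) (by omega)
      refine ⟨fun h => hx.notMem _ (by omega) (h ▸ hmem), ?_⟩
      rcases (by omega : i = t + 2 ∨ i < t + 2) with rfl | hi'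
      · rw [Nat.sub_self, ← hy0, (hy (Nat.succ_pos j) (by omega)).2]
        simp only [forkRel, doubleForkRel]
        omega
      · refine iff_of_false (fun h => hx.not_touches _ (by omega) (by omega) ⟨_, hmem, h⟩) ?_
        simp only [doubleForkRel]
        omega
  exact ⟨t + t', by omega, p, q, _, (by omega : t + 3 + (t' + 2) = t + t' + 5) ▸ hglue⟩

end ForkedTail

/-! ### Finding complete bipartite subgraphs -/

theorem insert_isNClique_of_subset_filter {n : ℕ} {A T : Finset V} {v : V} [DecidableEq V]
    [DecidablePred (G.Adj v)] (hv : v ∈ A) (hT : T ⊆ {x ∈ A | G.Adj v x}) (hn : G.IsNClique n T) :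
    insert v T ⊆ A ∧ G.IsNClique (n + 1) (insert v T) :=
  ⟨Finset.insert_subset hv (hT.trans (Finset.filter_subset _ _)),
    hn.insert fun _ hb => (Finset.mem_filter.1 (hT hb)).2⟩

theorem exists_isNClique_or_isNIndepSet.{u} (r s : ℕ) :
    ∃ N : ℕ, ∀ {V : Type u} (G : SimpleGraph V) (A : Finset V), N ≤ A.card →
      (∃ T ⊆ A, G.IsNClique r T) ∨ ∃ T ⊆ A, G.IsNIndepSet s T := by
  induction r generalizing s with
  | zero => exact ⟨0, fun G A _ => .inl ⟨∅, by simp⟩⟩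
  | succ r ihr =>
  induction s with
  | zero => exact ⟨0, fun G A _ => .inr ⟨∅, by simp [isNIndepSet_iff]⟩⟩
  | succ s ihs =>
    obtain ⟨N₁, h₁⟩ := ihr (s + 1)
    obtain ⟨N₂, h₂⟩ := ihs
    refine ⟨N₁ + N₂ + 1, fun G A hA => ?_⟩
    classical
    obtain ⟨v, hv⟩ : A.Nonempty := Finset.card_pos.1 (by omega)
    have hcard : A.card ≤ (A.filter (G.Adj v)).card + (A.filter (Gᶜ.Adj v)).card + 1 := by
      have := A.card_filter_add_card_filter_not (G.Adj v)
      have := Finset.card_le_card (s := A.filter (¬ G.Adj v ·))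
        (t := insert v (A.filter (Gᶜ.Adj v))) fun x hx => by
          simp only [Finset.mem_filter, Finset.mem_insert, compl_adj] at hx ⊢
          tauto
      have := Finset.card_insert_le v (A.filter (Gᶜ.Adj v))
      omega
    rcases le_or_gt N₁ (A.filter (G.Adj v)).card with hN | hN
    · rcases h₁ G _ hN with ⟨T, hT, hc⟩ | ⟨T, hT, hi⟩
      · exact .inl ⟨_, insert_isNClique_of_subset_filter hv hT hc⟩
      · exact .inr ⟨T, hT.trans (Finset.filter_subset _ _), hi⟩
    · rcases h₂ G (A.filter (Gᶜ.Adj v)) (by omega) with ⟨T, hT, hc⟩ | ⟨T, hT, hi⟩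
      · exact .inl ⟨T, hT.trans (Finset.filter_subset _ _), hc⟩
      · obtain ⟨hsub, hc⟩ := insert_isNClique_of_subset_filter hv hT ((isNClique_compl G).2 hi)
        exact .inr ⟨_, hsub, (isNClique_compl G).1 hc⟩

section PairwiseTouching

variable {ι : Type*} {q : ℕ}

theorem pos_of_completeBipartiteGraph_free
    (hG : (completeBipartiteGraph (Fin q) (Fin q)).Free G) : 0 < q := by
  rcases Nat.eq_zero_or_pos q with rfl | hq
  · exact absurd IsContained.of_isEmpty hG
  · exact hq

theorem card_lt_of_forall_exists_subset (hG : (completeBipartiteGraph (Fin q) (Fin q)).Free G)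
    (U : Finset V) {C : Finset ι} {F : ι → Finset V} (hF : (C : Set ι).PairwiseDisjoint F)
    (h : ∀ i ∈ C, ∃ y ∈ F i, ∃ Q ⊆ U, Q.card = q ∧ ∀ u ∈ Q, G.Adj y u) :
    C.card < 2 ^ U.card * q := by
  classical
  by_contra! hC
  have hq := pos_of_completeBipartiteGraph_free hG
  obtain ⟨i₀, hi₀⟩ : C.Nonempty := Finset.card_pos.1 (lt_of_lt_of_le (by positivity) hC)
  have : Nonempty V := ⟨(h i₀ hi₀).choose⟩
  choose! y hyF Q hQU hQ hadj using h
  obtain ⟨Q₀, -, hfib⟩ := Finset.exists_le_card_fiber_of_mul_le_card_of_maps_to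
    (fun i hi => Finset.mem_powerset.2 (hQU i hi)) ⟨∅, Finset.empty_mem_powerset U⟩
    ((Finset.card_powerset U).symm ▸ hC)
  obtain ⟨D, hD, hDq⟩ := Finset.exists_subset_card_eq hfib
  simp only [Finset.subset_iff, Finset.mem_filter] at hD
  have hinj : Set.InjOn y D := fun i hi j hj hij => hF.elim_finset (hD hi).1 (hD hj).1 (y i)
    (hyF i (hD hi).1) (hij ▸ hyF j (hD hj).1)
  refine hG (completeBipartiteGraph_isContained_iff.2 ?_)
  obtain ⟨i, hi⟩ : D.Nonempty := Finset.card_pos.1 (hDq ▸ hq)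
  refine ⟨D.image y, Q₀, ?_, ?_, ?_⟩
  · rw [Finset.card_image_of_injOn hinj, hDq, Fintype.card_fin]
  · rw [← (hD hi).2, hQ i (hD hi).1, Fintype.card_fin]
  · simp only [Finset.coe_image]
    rintro _ ⟨j, hj, rfl⟩ u hu
    exact hadj j (hD hj).1 u ((hD hj).2 ▸ hu)

theorem card_lt_of_pairwise_touches (hG : (completeBipartiteGraph (Fin q) (Fin q)).Free G) {d : ℕ}
    {C : Finset ι} {F : ι → Finset V} (hF : (C : Set ι).PairwiseDisjoint F)
    (hd : ∀ i ∈ C, (F i).card ≤ d)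
    (h : (C : Set ι).Pairwise fun i j => ∃ x ∈ F i, Touches G x (F j)) :
    C.card < (d + 1) * q + 2 ^ ((d + 1) * q * d) * q := by
  classical
  by_contra! hC
  obtain ⟨D, hDC, hD⟩ := Finset.exists_subset_card_eq (le_of_add_le_left hC)
  have hU : (D.biUnion F).card ≤ (d + 1) * q * d :=
    hD ▸ Finset.card_biUnion_le_card_mul D F d fun i hi => hd i (hDC hi)
  have hrest : 2 ^ ((d + 1) * q * d) * q ≤ (C \ D).card := by
    rw [Finset.card_sdiff_of_subset hDC]
    omega
  have hlt := card_lt_of_forall_exists_subset hG (D.biUnion F) (C := C \ D)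
    (hF.subset (by simp)) fun i hi => ?_
  · exact absurd (hrest.trans_lt hlt)
      (not_lt.2 (Nat.mul_le_mul_right q (Nat.pow_le_pow_right two_pos hU)))
  rw [Finset.mem_sdiff] at hi
  have hx : ∀ j ∈ D, ∃ x ∈ F i, ∃ z ∈ F j, G.Adj x z := fun j hj =>
    h hi.1 (hDC hj) (ne_of_mem_of_not_mem hj hi.2).symm
  have hq := pos_of_completeBipartiteGraph_free hG
  obtain ⟨j₀, hj₀⟩ : D.Nonempty := Finset.card_pos.1 (hD ▸ by positivity)
  have : Nonempty V := ⟨(hx j₀ hj₀).choose⟩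
  choose! x hxF z hzF hxz using hx
  obtain ⟨y, hyF, hfib⟩ := Finset.exists_le_card_fiber_of_mul_le_card_of_maps_to (n := q) hxF
    ⟨x j₀, hxF j₀ hj₀⟩ (hD ▸ Nat.mul_le_mul_right q ((hd i hi.1).trans d.le_succ))
  obtain ⟨E, hE, hEq⟩ := Finset.exists_subset_card_eq hfib
  simp only [Finset.subset_iff, Finset.mem_filter] at hE
  have hinj : Set.InjOn z E := fun j hj k hk hjk => hF.elim_finset (hDC (hE hj).1)
    (hDC (hE hk).1) (z j) (hzF j (hE hj).1) (hjk ▸ hzF k (hE hk).1)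
  refine ⟨y, hyF, E.image z, Finset.image_subset_iff.2 fun j hj =>
    Finset.mem_biUnion.2 ⟨j, (hE hj).1, hzF j (hE hj).1⟩, ?_, ?_⟩
  · rw [Finset.card_image_of_injOn hinj, hEq]
  · exact Finset.forall_mem_image.2 fun j hj => (hE hj).2 ▸ hxz j (hE hj).1

theorem exists_anticomplete_subfamily.{u, v} (q d s : ℕ) : ∃ N : ℕ, ∀ {V : Type u}
    {G : SimpleGraph V}, (completeBipartiteGraph (Fin q) (Fin q)).Free G →
    ∀ {ι : Type v} {C : Finset ι} {F : ι → Finset V}, (C : Set ι).PairwiseDisjoint F →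
    (∀ i ∈ C, (F i).card ≤ d) → N ≤ C.card →
    ∃ T ⊆ C, T.card = s ∧ (T : Set ι).Pairwise fun i j => ∀ x ∈ F i, ¬ Touches G x (F j) := by
  obtain ⟨N, hN⟩ := exists_isNClique_or_isNIndepSet ((d + 1) * q + 2 ^ ((d + 1) * q * d) * q) s
  refine ⟨N, fun {V G} hG {ι C F} hF hd hC => ?_⟩
  let H : SimpleGraph ι :=
    { Adj i j := i ≠ j ∧ ∃ x ∈ F i, Touches G x (F j)
      symm := ⟨fun i j ⟨hij, x, hx, y, hy, hxy⟩ => ⟨hij.symm, y, hy, x, hx, hxy.symm⟩⟩ }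
  rcases hN H C hC with ⟨T, hT, hclique, hcard⟩ | ⟨T, hT, hindep, hcard⟩
  · exact absurd hcard (card_lt_of_pairwise_touches hG (hF.subset hT) (fun i hi => hd i (hT hi))
      (hclique.imp fun _ _ h => h.2)).ne
  · exact ⟨T, hT, hcard, fun i hi j hj hij x hx ht => hindep hi hj hij ⟨hij, x, hx, ht⟩⟩

end PairwiseTouching

/-! ### Hubs -/

/-- A cyclic arrangement of pairwise nonadjacent vertices `h 0, …, h r` and pairwise anticomplete
connected sets `I 0, …, I r`, where `I l` joins `h l` to `h (l + 1)` (cyclically, by the addition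
of `Fin (r + 1)`) and sees no other `h a`. -/
structure HubRing {r : ℕ} (G : SimpleGraph V) (h : Fin (r + 1) → V) (I : Fin (r + 1) → Set V) :
    Prop where
  injective : Function.Injective h
  not_adj : ∀ a b, ¬ G.Adj (h a) (h b)
  notMem : ∀ a l, h a ∉ I l
  preconnected : ∀ l, (G.induce (I l)).Preconnected
  touches_iff : ∀ a l, Touches G (h a) (I l) ↔ a = l ∨ a = l + 1
  disjoint : Pairwise fun l l' => Disjoint (I l) (I l')
  not_touches : Pairwise fun l l' => ∀ x ∈ I l, ¬ Touches G x (I l')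

namespace HubRing

variable {r : ℕ} {h : Fin (r + 1) → V} {I : Fin (r + 1) → Set V}

theorem preconnected_arc (H : HubRing G h I) (m : Fin (r + 1)) :
    (G.induce (h '' Set.Iic m ∪ ⋃ l < m, I l)).Preconnected := by
  induction m using Fin.induction with
  | zero =>
    have : h '' Set.Iic (0 : Fin (r + 1)) ∪ ⋃ l < (0 : Fin (r + 1)), I l = {h 0} := by
      ext x; simp [eq_comm]
    rw [this]
    exact .of_subsingleton
  | succ m ih =>
    have harc : h '' Set.Iic m.succ ∪ ⋃ l < m.succ, I l =
        insert (h m.succ) ((h '' Set.Iic m.castSucc ∪ ⋃ l < m.castSucc, I l) ∪ I m.castSucc) := by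
      have hIic : Set.Iic m.succ = insert m.succ (Set.Iic m.castSucc) := by
        ext l
        simp only [Set.mem_Iic, Set.mem_insert_iff, Fin.le_def, Fin.ext_iff, Fin.val_succ,
          Fin.val_castSucc]
        omega
      have hlt : ∀ l, l < m.succ ↔ l < m.castSucc ∨ l = m.castSucc := by
        intro l
        simp only [Fin.lt_def, Fin.ext_iff, Fin.val_succ, Fin.val_castSucc]
        omega
      rw [hIic, Set.image_insert_eq, Set.insert_union, Set.union_assoc]
      simp only [hlt, Set.iUnion_or, Set.iUnion_union_distrib, Set.iUnion_iUnion_eq_left]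
    obtain ⟨y, hy, hxy⟩ := (H.touches_iff m.castSucc m.castSucc).2 (.inl rfl)
    rw [harc]
    refine preconnected_induce_insert (connected_induce_union ih (H.preconnected _)
      (.inl ⟨_, Set.self_mem_Iic, rfl⟩) hy hxy).preconnected
      (Touches.mono ?_ Set.subset_union_right)
    exact (H.touches_iff _ _).2 (.inr (Fin.coeSucc_eq_succ).symm)

theorem level_le (H : HubRing G h I) {k : ℕ} {w : ℕ → V} (hw : Induces G pathRel (k + 1) w)
    (h0 : w 0 = h 0) (hmem : ∀ i, w i ∈ h '' Set.Iic (Fin.last r) ∪ ⋃ l < Fin.last r, I l)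
    {i : ℕ} (hi : i ≤ k) :
    (∀ a, w i = h a → (a : ℕ) ≤ i) ∧ ∀ l < Fin.last r, w i ∈ I l → (l : ℕ) ≤ i := by
  induction i with
  | zero =>
    rw [h0]
    exact ⟨fun a ha => by simp [← H.injective ha], fun l _ hl => absurd hl (H.notMem 0 l)⟩
  | succ i ih =>
    obtain ⟨ihh, ihI⟩ := ih (by omega)
    have hadj : G.Adj (w i) (w (i + 1)) := (hw i.lt_succ_self (by omega)).2.2 rfl
    rcases hmem i with ⟨b, -, hb⟩ | hb
    · have hbi := ihh b hb.symm
      refine ⟨fun a ha => absurd hadj (hb ▸ ha ▸ H.not_adj b a), fun l hl hmem => ?_⟩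
      rcases (H.touches_iff b l).1 ⟨_, hmem, hb ▸ hadj⟩ with rfl | rfl
      · omega
      · rw [Fin.val_add_one_of_lt hl] at hbi
        omega
    · simp only [Set.mem_iUnion] at hb
      obtain ⟨l', hl', hb⟩ := hb
      have hli := ihI l' hl' hb
      refine ⟨fun a ha => ?_, fun l hl hmem => ?_⟩
      · rcases (H.touches_iff a l').1 ⟨_, hb, ha ▸ hadj.symm⟩ with rfl | rfl
        · omega
        · rw [Fin.val_add_one_of_lt hl']
          omega
      · rcases eq_or_ne l' l with rfl | hne
        · omega
        · exact absurd ⟨_, hmem, hadj⟩ (H.not_touches hne _ hb)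

theorem exists_cycleGraph_embedding (H : HubRing G h I) (hr : 2 ≤ r) :
    ∃ n, r < n ∧ Nonempty (cycleGraph n ↪g G) := by
  obtain ⟨k, w, hw, h0, hk, hmem⟩ := exists_induces_path (H.preconnected_arc (Fin.last r))
    (.inl ⟨0, Fin.le_last 0, rfl⟩) (.inl ⟨Fin.last r, Set.self_mem_Iic, rfl⟩)
  have hrk : r ≤ k := (H.level_le hw h0 hmem le_rfl).1 _ hk
  have hlast : ∀ i ≤ k, w i ∉ I (Fin.last r) := by
    intro i _
    rcases hmem i with ⟨a, -, ha⟩ | hI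
    · exact ha ▸ H.notMem a _
    · simp only [Set.mem_iUnion] at hI
      obtain ⟨l, hl, hI⟩ := hI
      exact (H.disjoint hl.ne).notMem_of_mem_left hI
  have hinterior : ∀ i, 0 < i → i < k → ¬ Touches G (w i) (I (Fin.last r)) := by
    intro i hi hik
    rcases hmem i with ⟨a, -, ha⟩ | hI
    · rw [← ha, H.touches_iff, Fin.last_add_one]
      rintro (rfl | rfl)
      · exact (hw hik (by omega)).1 (ha.symm.trans hk.symm)
      · exact (hw hi (by omega)).1 (h0.trans ha)
    · simp only [Set.mem_iUnion] at hI
      obtain ⟨l, hl, hI⟩ := hI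
      exact H.not_touches hl.ne _ hI
  obtain ⟨n, hn, hcycle⟩ := LongInducedPath.exists_cycleGraph_embedding (hr.trans hrk) hw
    (H.preconnected (Fin.last r)) hlast
    (h0 ▸ (H.touches_iff _ _).2 (.inr (Fin.last_add_one r).symm))
    (hk ▸ (H.touches_iff _ _).2 (.inl rfl)) hinterior
  exact ⟨n, hrk.trans_lt hn, hcycle⟩

end HubRing

/-- `X` is a set of hubs for `S`: the set `S` is connected, disjoint from `X`, and touched by every
vertex of `X`. For `X = {a, b}` this says that `S` joins `a` to `b`. -/
structure IsHubSet (G : SimpleGraph V) (X S : Set V) : Prop where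
  preconnected : (G.induce S).Preconnected
  disjoint : Disjoint X S
  touches : ∀ x ∈ X, Touches G x S

theorem IsHubSet.mono {X Y S : Set V} (h : IsHubSet G X S) (hY : Y ⊆ X) : IsHubSet G Y S :=
  ⟨h.preconnected, h.disjoint.mono_left hY, fun x hx => h.touches x (hY hx)⟩

theorem Induces.isHubSet_interior {k : ℕ} {w : ℕ → V} (hw : Induces G pathRel (k + 3) w) :
    IsHubSet G {w 0, w (k + 2)} (w '' Set.Ico 1 (k + 2)) where
  preconnected := hw.preconnected_image_Ico (by omega)
  disjoint := by
    rw [Set.disjoint_left]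
    rintro _ (rfl | rfl) ⟨i, ⟨hi0, hik⟩, hi⟩
    · exact (hw (Nat.pos_of_ne_zero (by omega) : 0 < i) (by omega)).1 hi.symm
    · exact (hw hik (by omega)).1 hi
  touches := by
    rintro _ (rfl | rfl)
    · exact ⟨w 1, ⟨1, ⟨le_rfl, by omega⟩, rfl⟩, (hw zero_lt_one (by omega)).2.2 rfl⟩
    · exact ⟨w (k + 1), ⟨k + 1, ⟨by omega, by omega⟩, rfl⟩,
        ((hw (k + 1).lt_succ_self (by omega)).2.2 rfl).symm⟩

theorem notMem_of_disjoint_ends {k : ℕ} {w : ℕ → V} {R R' : Set V} (hR : Disjoint R R')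
    (hw : w '' Set.Ico 1 (k + 2) ⊆ R) (hends : Disjoint {w 0, w (k + 2)} R') {i : ℕ}
    (hi : i ≤ k + 2) : w i ∉ R' := by
  rcases Nat.eq_zero_or_pos i with rfl | hi0
  · exact hends.notMem_of_mem_left (by simp)
  rcases hi.eq_or_lt with rfl | hik
  · exact hends.notMem_of_mem_left (by simp)
  · exact hR.notMem_of_mem_left (hw ⟨i, ⟨hi0, hik⟩, rfl⟩)

theorem exists_adj_of_common_ends {L : ℕ} (hL : 2 ≤ L) (hG : NoLongHole G L) {k k' : ℕ}
    {w w' : ℕ → V} (hw : Induces G pathRel (k + 3) w) (hw' : Induces G pathRel (k' + 3) w')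
    {a b : V} (ha : w 0 = a) (hb : w (k + 2) = b) (ha' : w' 0 = a) (hb' : w' (k' + 2) = b)
    (hLk : L ≤ k + 2) {R R' : Set V} (hR : Disjoint R R') (hends : Disjoint {a, b} R)
    (hends' : Disjoint {a, b} R') (hwR : w '' Set.Ico 1 (k + 2) ⊆ R)
    (hwR' : w' '' Set.Ico 1 (k' + 2) ⊆ R') :
    ∃ i ∈ Set.Ico 1 L, ∃ j ∈ Set.Ico 1 L, G.Adj (w i) (w' j) := by
  have hub' := ha' ▸ hb' ▸ hw'.isHubSet_interior
  have hsub : w '' Set.Ico 1 L ⊆ w '' Set.Ico 1 (k + 2) :=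
    Set.image_mono (Set.Ico_subset_Ico_right hLk)
  obtain ⟨i, hi0, -, hiL, _, ⟨j, ⟨hj0, hjk⟩, rfl⟩, hij⟩ := hG.exists_touches_lt hL hw
    hub'.preconnected
    (fun _ hi h => notMem_of_disjoint_ends hR hwR (ha ▸ hb ▸ hends') hi (hwR' h))
    (ha ▸ hub'.touches a (by simp)) ⟨k + 2, by omega, le_rfl, hb ▸ hub'.touches b (by simp)⟩
  obtain ⟨j', hj0', -, hjL', _, ⟨i', hi', rfl⟩, hij'⟩ := hG.exists_touches_lt hL hw'
    (hw.preconnected_image_Ico (a := 1) (b := L) (by omega))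
    (fun _ hj h => notMem_of_disjoint_ends hR.symm hwR' (ha' ▸ hb' ▸ hends) hj (hwR (hsub h)))
    ⟨w 1, ⟨1, ⟨le_rfl, hL⟩, rfl⟩, ha' ▸ ha ▸ (hw zero_lt_one (by omega)).2.2 rfl⟩
    ⟨j, hj0, hjk.le, w i, ⟨i, ⟨hi0, hiL⟩, rfl⟩, hij.symm⟩
  exact ⟨i', hi', j', ⟨hj0', hjL'⟩, hij'.symm⟩

section Connectors

variable {ι : Type*} {q L : ℕ}

theorem card_lt_of_no_small_connector (hL : 2 ≤ L) (hG : NoLongHole G L)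
    (hB : (completeBipartiteGraph (Fin q) (Fin q)).Free G) {a b : V} (hab : a ≠ b)
    (hadj : ¬ G.Adj a b) {C : Finset ι} {R : ι → Set V} (hR : (C : Set ι).PairwiseDisjoint R)
    (hhub : ∀ i ∈ C, IsHubSet G {a, b} (R i))
    (hlong : ∀ i ∈ C, ∀ S : Finset V, ↑S ⊆ R i → IsHubSet G {a, b} S → L < S.card) :
    C.card < (L + 1) * q + 2 ^ ((L + 1) * q * L) * q := by
  classical
  have hpath : ∀ i ∈ C, ∃ k u, Induces G pathRel (k + 3) u ∧ u 0 = a ∧ u (k + 2) = b ∧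
      u '' Set.Ico 1 (k + 2) ⊆ R i := fun i hi => by
    obtain ⟨k, u, hu, ha, hb, huR⟩ := exists_induces_path_through (hhub i hi).preconnected hab hadj
      ((hhub i hi).touches a (by simp)) ((hhub i hi).touches b (by simp))
    exact ⟨k, u, hu, ha, hb, Set.image_subset_iff.2 fun j hj => huR j hj.1 hj.2⟩
  have : Nonempty V := ⟨a⟩
  choose! k u hu hua hub huR using hpath
  have hLk : ∀ i ∈ C, L ≤ k i + 2 := by
    intro i hi
    have hlt := hlong i hi ((Finset.Ico 1 (k i + 2)).image (u i)) (by simpa using huR i hi)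
      (by simpa [hua i hi, hub i hi] using (hu i hi).isHubSet_interior)
    have := hlt.trans_le Finset.card_image_le
    rw [Nat.card_Ico] at this
    omega
  have hsub : ∀ i ∈ C, ↑((Finset.Ico 1 L).image (u i)) ⊆ R i := fun i hi => by
    rw [Finset.coe_image, Finset.coe_Ico]
    exact (Set.image_mono (Set.Ico_subset_Ico_right (hLk i hi))).trans (huR i hi)
  refine card_lt_of_pairwise_touches hB (F := fun i => (Finset.Ico 1 L).image (u i))
    (fun i hi j hj hij => ?_) (fun i _ => Finset.card_image_le.trans (by simp))
    (fun i hi j hj hij => ?_)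
  · exact Finset.disjoint_coe.1 ((hR hi hj hij).mono (hsub i hi) (hsub j hj))
  · obtain ⟨n, hn, n', hn', hadj⟩ := exists_adj_of_common_ends hL hG (hu i hi) (hu j hj)
      (hua i hi) (hub i hi) (hua j hj) (hub j hj) (hLk i hi) (hR hi hj hij) (hhub i hi).disjoint
      (hhub j hj).disjoint (huR i hi) (huR j hj)
    exact ⟨_, Finset.mem_image_of_mem _ (Finset.mem_Ico.2 hn), _,
      Finset.mem_coe.2 (Finset.mem_image_of_mem _ (Finset.mem_Ico.2 hn')), hadj⟩

theorem card_filter_mem_le {α β : Type*} [Fintype α] [DecidableEq α] [Fintype β] [DecidableEq β]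
    {τ : ℕ} {T : α → α → Finset α} (hT : ∀ a b, (T a b).card ≤ τ) {l j k : β} (hj : l ≠ j)
    (hk : l ≠ k) :
    (Finset.univ.filter fun f : β → α => f l ∈ T (f j) (f k)).card ≤
      τ * Fintype.card α ^ (Fintype.card β - 1) := by
  let restr : (β → α) → ({i // i ≠ l} → α) := fun f i => f i
  refine (Finset.card_le_mul_card_image (f := restr) _ τ fun g _ => ?_).trans
    (Nat.mul_le_mul_left τ ((Finset.card_le_univ _).trans (by simp)))
  refine (Finset.card_le_card_of_injOn (fun f => f l) (t := T (g ⟨j, hj.symm⟩) (g ⟨k, hk.symm⟩))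
    (fun f hf => ?_) fun f hf f' hf' hl => ?_).trans (hT _ _)
  · obtain ⟨hmem, rfl⟩ := Finset.mem_filter.1 hf
    exact (Finset.mem_filter.1 hmem).2
  · have hrestr := (Finset.mem_filter.1 hf).2.trans (Finset.mem_filter.1 hf').2.symm
    ext i
    rcases eq_or_ne i l with rfl | hi
    · exact hl
    · exact congr_fun hrestr ⟨i, hi⟩

theorem exists_free_tuple {α : Type*} [Fintype α] {s τ : ℕ} (hs : s ^ 3 * τ < Fintype.card α)
    {T : α → α → Finset α} (hT : ∀ a b, (T a b).card ≤ τ) :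
    ∃ f : Fin s → α, ∀ l j k, l ≠ j → l ≠ k → f l ∉ T (f j) (f k) := by
  classical
  rcases Nat.eq_zero_or_pos s with rfl | hs0
  · exact ⟨Fin.elim0, fun l => l.elim0⟩
  by_contra! hf
  -- Each `bad t` holds at most a fraction `τ / card α` of all tuples, so they cannot cover them.
  let bad : Fin s × Fin s × Fin s → Finset (Fin s → α) := fun t => Finset.univ.filter fun f =>
    t.1 ≠ t.2.1 ∧ t.1 ≠ t.2.2 ∧ f t.1 ∈ T (f t.2.1) (f t.2.2)
  have hcover : Finset.univ ⊆ Finset.univ.biUnion bad := fun f _ => by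
    obtain ⟨l, j, k, hlj, hlk, hmem⟩ := hf f
    exact Finset.mem_biUnion.2 ⟨(l, j, k), Finset.mem_univ _, Finset.mem_filter.2
      ⟨Finset.mem_univ _, hlj, hlk, hmem⟩⟩
  have hbad : ∀ t, (bad t).card ≤ τ * Fintype.card α ^ (s - 1) := by
    intro t
    by_cases ht : t.1 ≠ t.2.1 ∧ t.1 ≠ t.2.2
    · simpa [bad, ht] using card_filter_mem_le hT ht.1 ht.2
    · have : bad t = ∅ := Finset.filter_false_of_mem fun f _ h => ht ⟨h.1, h.2.1⟩
      simp [this]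
  have hle := (Finset.card_le_card hcover).trans
    (Finset.card_biUnion_le_card_mul _ _ _ fun t _ => hbad t)
  have : s ^ 3 * τ * Fintype.card α ^ (s - 1) < Fintype.card α ^ (s - 1 + 1) := by
    rw [pow_succ' (Fintype.card α)]
    exact Nat.mul_lt_mul_of_pos_right hs (pow_pos (hs.pos) _)
  simp only [Finset.card_univ, Fintype.card_fun, Fintype.card_prod, Fintype.card_fin] at hle
  rw [Nat.sub_add_cancel hs0] at this
  exact absurd hle (not_le.2 (lt_of_eq_of_lt (by ring) this))

theorem card_le_card_filter_forall_add {α β : Type*} {P : α → β → Prop} [∀ a, DecidablePred (P a)]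
    {A : Finset α} {B : Finset β} {N : ℕ} [DecidablePred fun b => ∀ a ∈ A, P a b]
    (h : ∀ a ∈ A, (B.filter fun b => ¬ P a b).card ≤ N) :
    B.card ≤ (B.filter fun b => ∀ a ∈ A, P a b).card + A.card * N := by
  classical
  rw [← B.card_filter_add_card_filter_not fun b => ∀ a ∈ A, P a b]
  refine Nat.add_le_add_left (le_trans (Finset.card_le_card (t := A.biUnion fun a =>
    B.filter fun b => ¬ P a b) fun b hb => ?_) (Finset.card_biUnion_le_card_mul A _ N h)) _
  simp only [Finset.mem_filter, not_forall, Finset.mem_biUnion] at hb ⊢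
  obtain ⟨hbB, a, ha, hab⟩ := hb
  exact ⟨a, ha, hbB, hab⟩

/-- The sets `S a b`, for distinct `a, b ∈ X`, are connected subsets of `R` with at most `L`
vertices joining `a` to `b`. -/
structure AreConnectors (G : SimpleGraph V) (L : ℕ) (X : Finset V) (R : Set V)
    (S : V → V → Finset V) : Prop where
  subset : ∀ a ∈ X, ∀ b ∈ X, a ≠ b → ↑(S a b) ⊆ R
  isHubSet : ∀ a ∈ X, ∀ b ∈ X, a ≠ b → IsHubSet G {a, b} (S a b)
  card_le : ∀ a ∈ X, ∀ b ∈ X, a ≠ b → (S a b).card ≤ L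

open Classical in
/-- The vertices of all the connectors `S a b` with distinct `a, b ∈ X`. -/
noncomputable def connectorVerts (X : Finset V) (S : V → V → Finset V) : Finset V :=
  X.offDiag.biUnion fun p => S p.1 p.2

theorem mem_connectorVerts {X : Finset V} {S : V → V → Finset V} {y : V} :
    y ∈ connectorVerts X S ↔ ∃ a ∈ X, ∃ b ∈ X, a ≠ b ∧ y ∈ S a b := by
  simp only [connectorVerts, Finset.mem_biUnion, Finset.mem_offDiag, Prod.exists, and_assoc]
  grind

theorem AreConnectors.connectorVerts_subset {X : Finset V} {R : Set V} {S : V → V → Finset V}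
    (hS : AreConnectors G L X R S) : ↑(connectorVerts X S) ⊆ R := fun y hy => by
  obtain ⟨a, ha, b, hb, hab, hy⟩ := mem_connectorVerts.1 (Finset.mem_coe.1 hy)
  exact hS.subset a ha b hb hab hy

theorem AreConnectors.card_connectorVerts_le {X : Finset V} {R : Set V} {S : V → V → Finset V}
    (hS : AreConnectors G L X R S) : (connectorVerts X S).card ≤ X.offDiag.card * L := by
  classical
  refine Finset.card_biUnion_le_card_mul _ _ L fun p hp => ?_
  obtain ⟨ha, hb, hab⟩ := Finset.mem_offDiag.1 hp
  exact hS.card_le _ ha _ hb hab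

theorem pairwiseDisjoint_connectorVerts {X : Finset V} {C : Finset ι} {R : ι → Set V}
    (hR : (C : Set ι).PairwiseDisjoint R) {S : ι → V → V → Finset V}
    (hS : ∀ i ∈ C, AreConnectors G L X (R i) (S i)) :
    (C : Set ι).PairwiseDisjoint fun i => connectorVerts X (S i) := fun i hi j hj hij =>
  Finset.disjoint_coe.1 ((hR hi hj hij).mono (hS i hi).connectorVerts_subset
    (hS j hj).connectorVerts_subset)

theorem exists_areConnectors (hL : 2 ≤ L) (hG : NoLongHole G L)
    (hB : (completeBipartiteGraph (Fin q) (Fin q)).Free G) {X : Finset V} (hX : G.IsIndepSet X)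
    {C : Finset ι} {R : ι → Set V} (hR : (C : Set ι).PairwiseDisjoint R)
    (hhub : ∀ i ∈ C, IsHubSet G X (R i)) :
    ∃ D ⊆ C, C.card ≤ D.card + X.offDiag.card * ((L + 1) * q + 2 ^ ((L + 1) * q * L) * q) ∧
      ∃ S : ι → V → V → Finset V, ∀ i ∈ D, AreConnectors G L X (R i) (S i) := by
  classical
  let P : V × V → ι → Prop := fun p i =>
    ∃ S : Finset V, ↑S ⊆ R i ∧ IsHubSet G {p.1, p.2} S ∧ S.card ≤ L
  refine ⟨C.filter fun i => ∀ p ∈ X.offDiag, P p i, Finset.filter_subset _ _,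
    card_le_card_filter_forall_add fun p hp => ?_, ?_⟩
  · obtain ⟨ha, hb, hab⟩ := Finset.mem_offDiag.1 hp
    refine (card_lt_of_no_small_connector hL hG hB hab (hX ha hb hab)
      (hR.subset (Finset.filter_subset _ _)) (fun i hi => ?_) fun i hi S hS hS' => ?_).le
    · exact (hhub i (Finset.mem_filter.1 hi).1).mono
        (Set.insert_subset ha (Set.singleton_subset_iff.2 hb))
    · exact not_le.1 fun h => (Finset.mem_filter.1 hi).2 ⟨S, hS, hS', h⟩
  · have h : ∀ i, ∀ a b, (i ∈ C.filter fun i => ∀ p ∈ X.offDiag, P p i) → a ∈ X → b ∈ X → a ≠ b →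
        P (a, b) i := fun i a b hi ha hb hab =>
      (Finset.mem_filter.1 hi).2 (a, b) (Finset.mem_offDiag.2 ⟨ha, hb, hab⟩)
    choose! S hSR hS hSL using h
    exact ⟨S, fun i hi => ⟨fun a ha b hb => hSR i a b hi ha hb, fun a ha b hb => hS i a b hi ha hb,
      fun a ha b hb => hSL i a b hi ha hb⟩⟩

theorem card_lt_of_many_neighbors (hB : (completeBipartiteGraph (Fin q) (Fin q)).Free G)
    {X : Finset V} {C : Finset ι} {R : ι → Set V} (hR : (C : Set ι).PairwiseDisjoint R)
    {S : ι → V → V → Finset V} (hS : ∀ i ∈ C, AreConnectors G L X (R i) (S i))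
    [DecidableRel G.Adj]
    (h : ∀ i ∈ C, ∃ y ∈ connectorVerts X (S i), q ≤ (X.filter (G.Adj y)).card) :
    C.card < 2 ^ X.card * q := by
  refine card_lt_of_forall_exists_subset hB X (pairwiseDisjoint_connectorVerts hR hS)
    fun i hi => ?_
  obtain ⟨y, hy, hq⟩ := h i hi
  obtain ⟨Q, hQ, hQq⟩ := Finset.exists_subset_card_eq hq
  exact ⟨y, hy, Q, hQ.trans (Finset.filter_subset _ _), hQq,
    fun u hu => (Finset.mem_filter.1 (hQ hu)).2⟩

theorem exists_tuple_avoiding_connectors [DecidableRel G.Adj] {X : Finset V} {T : Finset ι}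
    {R : ι → Set V} {S : ι → V → V → Finset V} (hS : ∀ i ∈ T, AreConnectors G L X (R i) (S i))
    (hq : ∀ i ∈ T, ∀ y ∈ connectorVerts X (S i), (X.filter (G.Adj y)).card ≤ q) {s : ℕ}
    (hX : s ^ 3 * (2 + T.card * (L * q)) < X.card) :
    ∃ f : Fin s → V, (∀ l, f l ∈ X) ∧ Function.Injective f ∧ ∀ l j k, l ≠ j → l ≠ k → j ≠ k →
      ∀ i ∈ T, ¬ Touches G (f l) (S i (f j) (f k)) := by
  classical
  let seen : V → V → Finset V := fun a b =>
    if a ∈ X ∧ b ∈ X ∧ a ≠ b then T.biUnion fun i => (S i a b).biUnion fun y => X.filter (G.Adj y)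
    else ∅
  have hseen : ∀ a b, (seen a b).card ≤ T.card * (L * q) := by
    intro a b
    by_cases hab : a ∈ X ∧ b ∈ X ∧ a ≠ b
    · simp only [seen, if_pos hab]
      refine Finset.card_biUnion_le_card_mul _ _ _ fun i hi => ?_
      exact (Finset.card_biUnion_le_card_mul _ _ q
        fun y hy => hq i hi y (mem_connectorVerts.2 ⟨a, hab.1, b, hab.2.1, hab.2.2, hy⟩)).trans
        (Nat.mul_le_mul_right q ((hS i hi).card_le a hab.1 b hab.2.1 hab.2.2))
    · simp [seen, if_neg hab]
  obtain ⟨f, hf⟩ := exists_free_tuple (α := X) (by rwa [Fintype.card_coe])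
    (T := fun a b => ({(a : V), (b : V)} ∪ seen a b).subtype (· ∈ X)) fun a b =>
      (Finset.card_subtype _ _).trans_le <| (Finset.card_filter_le _ _).trans <|
        (Finset.card_union_le _ _).trans (Nat.add_le_add Finset.card_le_two (hseen a b))
  simp only [Finset.mem_subtype, Finset.mem_union, Finset.mem_insert, Finset.mem_singleton,
    SetLike.coe_eq_coe, not_or] at hf
  have hinj : Function.Injective f := fun l j hlj => by
    by_contra hne
    exact (hf l j j hne hne).1.1 hlj
  refine ⟨fun l => f l, fun l => (f l).2, Subtype.val_injective.comp hinj,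
    fun l j k hlj hlk hjk i hi ⟨y, hy, hadj⟩ => (hf l j k hlj hlk).2 ?_⟩
  simp only [seen, if_pos (⟨(f j).2, (f k).2, Subtype.coe_ne_coe.2 (hinj.ne hjk)⟩ :
    (f j : V) ∈ X ∧ (f k : V) ∈ X ∧ (f j : V) ≠ f k), Finset.mem_biUnion, Finset.mem_filter]
  exact ⟨i, hi, y, hy, (f l).2, hadj.symm⟩

theorem exists_hubRing (hL : 1 ≤ L) [DecidableRel G.Adj] {X : Finset V} (hX : G.IsIndepSet X)
    {T : Finset ι} (hT : T.card = L + 1) {R : ι → Set V} (hR : (T : Set ι).PairwiseDisjoint R)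
    (hXR : ∀ i ∈ T, Disjoint ↑X (R i)) {S : ι → V → V → Finset V}
    (hS : ∀ i ∈ T, AreConnectors G L X (R i) (S i))
    (hq : ∀ i ∈ T, ∀ y ∈ connectorVerts X (S i), (X.filter (G.Adj y)).card ≤ q)
    (hanti : (T : Set ι).Pairwise fun i j =>
      ∀ x ∈ connectorVerts X (S i), ¬ Touches G x (connectorVerts X (S j)))
    (hm : (L + 1) ^ 3 * (2 + (L + 1) * (L * q)) < X.card) :
    ∃ (h : Fin (L + 1) → V) (I : Fin (L + 1) → Set V), HubRing G h I := by
  obtain ⟨h, hhX, hinj, havoid⟩ := exists_tuple_avoiding_connectors hS hq (s := L + 1) (hT ▸ hm)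
  let e : Fin (L + 1) ≃ T := (T.equivFinOfCardEq hT).symm
  have he : Pairwise fun l l' => (e l : ι) ≠ e l' := fun l l' hl =>
    Subtype.coe_ne_coe.2 (e.injective.ne hl)
  have : NeZero L := ⟨by omega⟩
  have hne : ∀ l : Fin (L + 1), l ≠ l + 1 := fun l hl => by simp at hl
  have hverts : ∀ l, S (e l) (h l) (h (l + 1)) ⊆ connectorVerts X (S (e l)) := fun l _ hy =>
    mem_connectorVerts.2 ⟨_, hhX l, _, hhX _, hinj.ne (hne l), hy⟩
  have hsub : ∀ l, ↑(S (e l) (h l) (h (l + 1))) ⊆ R (e l) := fun l =>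
    (hS _ (e l).2).subset _ (hhX l) _ (hhX _) (hinj.ne (hne l))
  have hhub : ∀ l, IsHubSet G {h l, h (l + 1)} (S (e l) (h l) (h (l + 1))) := fun l =>
    (hS _ (e l).2).isHubSet _ (hhX l) _ (hhX _) (hinj.ne (hne l))
  refine ⟨h, fun l => S (e l) (h l) (h (l + 1)), hinj, fun a b hab =>
    hX (hhX a) (hhX b) hab.ne hab, fun a l ha => (hXR _ (e l).2).notMem_of_mem_left (hhX a)
    (hsub l ha), fun l => (hhub l).preconnected, fun a l => ⟨fun ha => ?_, ?_⟩, fun l l' hl =>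
    (hR (e l).2 (e l').2 (he hl)).mono (hsub l) (hsub l'), fun l l' hl x hx hxt =>
    hanti (e l).2 (e l').2 (he hl) x (hverts l hx) (hxt.mono (hverts l'))⟩
  · by_contra! hal
    exact havoid a l (l + 1) hal.1 hal.2 (hne l) _ (e l).2 ha
  · rintro (rfl | rfl)
    · exact (hhub a).touches _ (by simp)
    · exact (hhub l).touches _ (by simp)

theorem exists_forall_not_isHubSet_of_isNIndepSet.{u, v} (hL : 2 ≤ L) (q : ℕ) :
    ∃ m M : ℕ, ∀ {V : Type u} {G : SimpleGraph V}, NoLongHole G L →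
      (completeBipartiteGraph (Fin q) (Fin q)).Free G → ∀ {X : Finset V}, G.IsNIndepSet m X →
      ∀ {ι : Type v} {C : Finset ι} {R : ι → Set V}, (C : Set ι).PairwiseDisjoint R →
      M ≤ C.card → ¬ ∀ i ∈ C, IsHubSet G X (R i) := by
  classical
  let m := (L + 1) ^ 3 * (2 + (L + 1) * (L * q)) + 1
  obtain ⟨N, hN⟩ := exists_anticomplete_subfamily.{u, v} q (m * m * L) (L + 1)
  refine ⟨m, N + 2 ^ m * q + m * m * ((L + 1) * q + 2 ^ ((L + 1) * q * L) * q),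
    fun {V G} hG hB {X} hX {ι C R} hR hC hhub => ?_⟩
  obtain ⟨hX, hXm⟩ := hX
  have hoff : X.offDiag.card ≤ m * m := by
    rw [Finset.offDiag_card, hXm]
    omega
  obtain ⟨D, hDC, hCD, S, hS⟩ := exists_areConnectors hL hG hB hX hR hhub
  let B := D.filter fun i => ∃ y ∈ connectorVerts X (S i), q ≤ (X.filter (G.Adj y)).card
  have hBcard : B.card < 2 ^ m * q := hXm ▸ card_lt_of_many_neighbors hB
    (hR.subset ((Finset.filter_subset _ _).trans hDC))
    (fun i hi => hS i (Finset.mem_filter.1 hi).1) fun i hi => (Finset.mem_filter.1 hi).2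
  have hDB : N ≤ (D \ B).card := by
    have := Nat.mul_le_mul_right ((L + 1) * q + 2 ^ ((L + 1) * q * L) * q) hoff
    have := Finset.le_card_sdiff B D
    omega
  have hdisj := pairwiseDisjoint_connectorVerts (hR.subset hDC) hS
  obtain ⟨T, hT, hTcard, hanti⟩ := hN hB (hdisj.subset Finset.sdiff_subset) (fun i hi =>
    (hS i (Finset.mem_sdiff.1 hi).1).card_connectorVerts_le.trans (Nat.mul_le_mul_right L hoff)) hDB
  have hTD : T ⊆ D := hT.trans Finset.sdiff_subset
  have hfew : ∀ i ∈ T, ∀ y ∈ connectorVerts X (S i), (X.filter (G.Adj y)).card ≤ q := by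
    intro i hi y hy
    by_contra! hlt
    exact (Finset.mem_sdiff.1 (hT hi)).2 (Finset.mem_filter.2 ⟨hTD hi, y, hy, hlt.le⟩)
  obtain ⟨h, I, H⟩ := exists_hubRing (by omega) hX hTcard (hR.subset (hTD.trans hDC))
    (fun i hi => (hhub i (hDC (hTD hi))).disjoint) (fun i hi => hS i (hTD hi)) hfew hanti (by omega)
  obtain ⟨n, hn, hcycle⟩ := H.exists_cycleGraph_embedding hL
  exact (hG n hn.le).false hcycle.some

theorem exists_forall_not_isHubSet.{u, v} (hL : 2 ≤ L) (q : ℕ) :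
    ∃ m M : ℕ, ∀ {V : Type u} {G : SimpleGraph V}, NoLongHole G L →
      (completeBipartiteGraph (Fin q) (Fin q)).Free G → ∀ {X : Finset V}, m ≤ X.card →
      ∀ {ι : Type v} {C : Finset ι} {R : ι → Set V}, (C : Set ι).PairwiseDisjoint R →
      M ≤ C.card → ¬ ∀ i ∈ C, IsHubSet G X (R i) := by
  classical
  obtain ⟨m, M, hM⟩ := exists_forall_not_isHubSet_of_isNIndepSet.{u, v} hL q
  obtain ⟨N, hN⟩ := exists_isNClique_or_isNIndepSet.{u} (2 * q) m
  refine ⟨N, M, fun {V G} hG hB {X} hX {ι C R} hR hC hhub => ?_⟩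
  rcases hN G X hX with ⟨T, -, hT, hTcard⟩ | ⟨T, hTX, hT⟩
  · obtain ⟨A, hA, hAq⟩ := Finset.exists_subset_card_eq (s := T) (n := q) (by omega)
    refine hB (completeBipartiteGraph_isContained_iff.2 ⟨A, T \ A, by simpa, ?_, ?_⟩)
    · rw [Finset.card_sdiff_of_subset hA, Fintype.card_fin]
      omega
    · simp only [Finset.coe_sdiff]
      exact fun a ha b hb => hT (hA ha) hb.1 (ne_of_mem_of_not_mem ha hb.2)
  · exact hM hG hB hT hR hC fun i hi => (hhub i hi).mono (Finset.coe_subset.2 hTX)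

end Connectors

theorem nonempty_completeBipartiteGraph_embedding {s t : ℕ} {A B : Finset V}
    (hA : G.IsNIndepSet s A) (hB : G.IsNIndepSet t B) (hAB : ∀ a ∈ A, ∀ b ∈ B, G.Adj a b) :
    Nonempty (completeBipartiteGraph (Fin s) (Fin t) ↪g G) := by
  let eA := A.equivFinOfCardEq hA.card_eq
  let eB := B.equivFinOfCardEq hB.card_eq
  let f : Fin s ⊕ Fin t → V := Sum.elim (fun i => eA.symm i) fun i => eB.symm i
  have hf : ∀ i j, G.Adj (eA.symm i) (eB.symm j) := fun i j =>
    hAB _ (eA.symm i).2 _ (eB.symm j).2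
  have hnotA : ∀ i j, ¬ G.Adj (eA.symm i) (eA.symm j) := fun i j h =>
    hA.isIndepSet (eA.symm i).2 (eA.symm j).2 h.ne h
  have hnotB : ∀ i j, ¬ G.Adj (eB.symm i) (eB.symm j) := fun i j h =>
    hB.isIndepSet (eB.symm i).2 (eB.symm j).2 h.ne h
  have hinj : Function.Injective f :=
    (Subtype.val_injective.comp eA.symm.injective).sumElim
      (Subtype.val_injective.comp eB.symm.injective) fun i j => (hf i j).ne
  refine ⟨⟨⟨f, hinj⟩, ?_⟩⟩
  rintro (i | i) (j | j) <;> simp [f, hf, hnotA, hnotB, (hf _ _).symm]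

theorem exists_completeBipartiteGraph_free_or_embedding.{u} (r s t : ℕ) :
    ∃ q, ∀ {V : Type u} (G : SimpleGraph V), G.CliqueFree r →
      IsEmpty (completeBipartiteGraph (Fin s) (Fin t) ↪g G) →
      (completeBipartiteGraph (Fin q) (Fin q)).Free G := by
  obtain ⟨N₁, h₁⟩ := exists_isNClique_or_isNIndepSet.{u} r s
  obtain ⟨N₂, h₂⟩ := exists_isNClique_or_isNIndepSet.{u} r t
  refine ⟨max N₁ N₂, fun {V} G hclique hbiclique ⟨f⟩ => ?_⟩
  let A := Finset.univ.map (Function.Embedding.inl.trans f.toEmbedding)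
  let B := Finset.univ.map (Function.Embedding.inr.trans f.toEmbedding)
  have hAB : ∀ a ∈ A, ∀ b ∈ B, G.Adj a b := fun a ha b hb => by
    obtain ⟨i, -, rfl⟩ := Finset.mem_map.1 ha
    obtain ⟨j, -, rfl⟩ := Finset.mem_map.1 hb
    exact f.toHom.map_adj (by simp)
  obtain ⟨A', hA', hA'i⟩ := (h₁ G A (by simp [A])).resolve_left
    fun ⟨T, _, hT⟩ => hclique T hT
  obtain ⟨B', hB', hB'i⟩ := (h₂ G B (by simp [B])).resolve_left
    fun ⟨T, _, hT⟩ => hclique T hT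
  exact (nonempty_completeBipartiteGraph_embedding hA'i hB'i fun a ha b hb =>
    hAB a (hA' ha) b (hB' hb)).elim hbiclique.false

/-! ### The dodging game -/

/-- `J` contains a tripod and is connected: the least a set must offer to carry on the dodging
game of `CanDodge`. -/
def IsRoomy (G : SimpleGraph V) (J : Set V) : Prop :=
  (G.induce J).Preconnected ∧ ∃ Y ⊆ J, IsTripod G Y

/-- For `j` rounds, whichever vertex of `I` is named, one can retreat from `J` to a roomy subset
that neither contains nor touches that vertex. -/
def CanDodge (G : SimpleGraph V) (I : Set V) : ℕ → Set V → Prop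
  | 0, J => IsRoomy G J
  | j + 1, J => IsRoomy G J ∧
      ∀ y ∈ I, ∃ J' ⊆ J, y ∉ J' ∧ ¬ Touches G y J' ∧ CanDodge G I j J'

namespace CanDodge

variable {I J : Set V}

theorem isRoomy : ∀ {j : ℕ}, CanDodge G I j J → IsRoomy G J
  | 0, h => h
  | _ + 1, h => h.1

theorem exists_subset_of_finset {j : ℕ} {Y : Finset V} (hY : ↑Y ⊆ I)
    (hJ : CanDodge G I (j + Y.card) J) :
    ∃ J' ⊆ J, Disjoint J' Y ∧ (∀ y ∈ Y, ¬ Touches G y J') ∧ CanDodge G I j J' := by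
  classical
  induction Y using Finset.induction_on generalizing J with
  | empty => exact ⟨J, subset_rfl, by simp, by simp, hJ⟩
  | insert y Y hy ih =>
    rw [Finset.card_insert_of_notMem hy] at hJ
    rw [Finset.coe_insert, Set.insert_subset_iff] at hY
    obtain ⟨J₁, hJ₁, hyJ₁, hyt, hdodge⟩ := hJ.2 y hY.1
    obtain ⟨J₂, hJ₂, hYJ₂, hYt, hdodge⟩ := ih hY.2 hdodge
    refine ⟨J₂, hJ₂.trans hJ₁, ?_, ?_, hdodge⟩
    · rw [Finset.coe_insert, Set.disjoint_insert_right]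
      exact ⟨fun h => hyJ₁ (hJ₂ h), hYJ₂⟩
    · rw [Finset.forall_mem_insert]
      exact ⟨fun h => hyt (h.mono hJ₂), hYt⟩

theorem exists_hasDoubleFork_of_forkedTail (hfin : I.Finite) {j : ℕ} (hJ : CanDodge G I j J)
    {t : ℕ} {p : Prop} {x : ℕ → V} {D : Set V} (hx : ForkedTail G t p x D) (hJD : J ⊆ D)
    (hDI : D ⊆ I) (hx0 : x 0 ∈ I) : ∃ k, t + j ≤ k ∧ HasDoubleFork G k := by
  induction j generalizing J t x D with
  | zero =>
    obtain ⟨-, Y, hYJ, hY⟩ := hJ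
    exact hx.exists_hasDoubleFork (hfin.subset hDI) hY (hYJ.trans hJD)
  | succ j ih =>
    obtain ⟨J', hJ', -, hxt, hdodge⟩ := hJ.2 _ hx0
    obtain ⟨hconn, Y, hYJ', hY⟩ := hdodge.isRoomy
    obtain ⟨y, E, hy, hJE, hED, hy0⟩ :=
      hx.extend (hJ'.trans hJD) (hY.nonempty.mono hYJ') hconn hxt
    obtain ⟨k, hk, hfork⟩ := ih hdodge hy hJE (hED.trans hDI) (hDI hy0)
    exact ⟨k, by omega, hfork⟩

theorem exists_hasDoubleFork (hfin : I.Finite) {l : ℕ} (hI : CanDodge G I (l + 4) I) :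
    ∃ k, l ≤ k ∧ HasDoubleFork G k := by
  obtain ⟨hconn, Y, hYI, hY⟩ := hI.isRoomy
  lift Y to Finset V using hY.finite
  rw [← hY.ncard_eq, Set.ncard_coe_finset] at hI
  obtain ⟨J, hJI, hJY, hYt, hdodge⟩ := hI.exists_subset_of_finset hYI
  obtain ⟨hJconn, Y', hYJ', hY'⟩ := hdodge.isRoomy
  obtain ⟨t, p, x, E, hx, hJE, hEI, hx0⟩ :=
    hY.exists_forkedTail hconn hYI hJI (hY'.nonempty.mono hYJ') hJconn hJY hYt
  obtain ⟨k, hk, hfork⟩ := hdodge.exists_hasDoubleFork_of_forkedTail hfin hx hJE hEI hx0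
  exact ⟨k, by omega, hfork⟩

end CanDodge

/-! ### Long paths -/

/-- `v 0, …, v (n - 1)` are the consecutive vertices of a (not necessarily induced) path. -/
structure IsPathOn (G : SimpleGraph V) (v : ℕ → V) (n : ℕ) : Prop where
  injOn : Set.InjOn v (Set.Iio n)
  adj : ∀ i, i + 1 < n → G.Adj (v i) (v (i + 1))

theorem isPathOn_getVert {x y : V} {w : G.Walk x y} (hw : w.IsPath) :
    IsPathOn G w.getVert (w.length + 1) where
  injOn := fun i hi j hj => hw.getVert_injOn (Nat.lt_succ_iff.1 hi) (Nat.lt_succ_iff.1 hj)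
  adj := fun i hi => w.adj_getVert_succ (by omega)

/-- `I` is the vertex set of a subpath of order `N` of the path `v 0, …, v (n - 1)`. -/
def IsSegment (v : ℕ → V) (n N : ℕ) (I : Set V) : Prop :=
  ∃ b, b + N ≤ n ∧ I = v '' Set.Ico b (b + N)

/-- All segments inside `I` of order at least `N / D` are hub sets for `X`; here `I` is meant to be
a segment of order `N`. -/
def HubsThroughout (G : SimpleGraph V) (v : ℕ → V) (n : ℕ) (X : Set V) (D N : ℕ) (I : Set V) :
    Prop :=
  ∀ J ⊆ I, ∀ M, IsSegment v n M J → N ≤ D * M → IsHubSet G X J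

/-- No `h` vertices are hubs throughout a segment of order at least `K * (p + 2)`. -/
def EscapesHubs (G : SimpleGraph V) (v : ℕ → V) (n p h K : ℕ) : Prop :=
  ∀ (X : Finset V) (I : Set V) (N : ℕ), X.card = h → IsSegment v n N I → K * (p + 2) ≤ N →
    ¬ HubsThroughout G v n X K N I

section Segments

variable {v : ℕ → V} {n N p D K h : ℕ} {I J X : Set V} {X' : Finset V}

theorem IsPathOn.exists_isTripod (hv : IsPathOn G v (p + 2))
    (hp : ¬ Induces G pathRel (p + 1) v) : ∃ Y ⊆ v '' Set.Iio (p + 2), IsTripod G Y := by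
  classical
  obtain ⟨i, j, hij, hj, hadj⟩ : ∃ i j, i + 2 ≤ j ∧ j ≤ p ∧ G.Adj (v i) (v j) := by
    by_contra! hchord
    refine hp fun i j hij hj => ⟨hv.injOn.ne ?_ ?_ hij.ne, fun hadj => ?_, ?_⟩
    · exact Set.mem_Iio.2 (by omega)
    · exact Set.mem_Iio.2 (by omega)
    · by_contra hne
      exact hchord i j (by simp only [pathRel] at hne; omega) (by omega) hadj
    · rintro rfl
      exact hv.adj i (by omega)
  obtain ⟨j, rfl⟩ := Nat.exists_eq_add_of_le hij
  have hne : ∀ a b, a < b → b < p + 2 → v a ≠ v b := fun a b hab hb =>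
    hv.injOn.ne (Set.mem_Iio.2 (by omega)) (Set.mem_Iio.2 hb) hab.ne
  refine ⟨_, ?_, v (i + 2 + j), {v i, v (i + 1 + j), v (i + 3 + j)}, ?_, ?_, rfl⟩
  · rintro x hx
    simp only [Finset.coe_insert, Finset.coe_singleton, Set.mem_insert_iff,
      Set.mem_singleton_iff] at hx
    rcases hx with rfl | rfl | rfl | rfl <;>
      exact Set.mem_image_of_mem v (Set.mem_Iio.2 (by omega))
  · exact Finset.card_eq_three.2 ⟨_, _, _, hne _ _ (by omega) (by omega),
      hne _ _ (by omega) (by omega), hne _ _ (by omega) (by omega), rfl⟩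
  · simp only [Finset.mem_insert, Finset.mem_singleton]
    rintro x (rfl | rfl | rfl)
    · exact hadj.symm
    · rw [show i + 2 + j = i + 1 + j + 1 by omega]
      exact (hv.adj _ (by omega)).symm
    · rw [show i + 3 + j = i + 2 + j + 1 by omega]
      exact hv.adj _ (by omega)

namespace IsSegment

theorem finite (hI : IsSegment v n N I) : I.Finite := by
  obtain ⟨b, -, rfl⟩ := hI
  exact (Set.finite_Ico _ _).image v

theorem preconnected (hI : IsSegment v n N I) (hv : IsPathOn G v n) :
    (G.induce I).Preconnected := by
  obtain ⟨b, hb, rfl⟩ := hI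
  exact preconnected_image_Ico fun i hi => hv.adj i (by omega)

theorem exists_pairwiseDisjoint {l M : ℕ} (hI : IsSegment v n N I)
    (hv : Set.InjOn v (Set.Iio n)) (hM : M * l ≤ N) :
    ∃ J : ℕ → Set V, (∀ i < M, J i ⊆ I ∧ IsSegment v n l (J i)) ∧
      (Set.Iio M).PairwiseDisjoint J := by
  obtain ⟨b, hb, rfl⟩ := hI
  have hle : ∀ i < M, i * l + l ≤ N := fun i hi => by
    rw [← Nat.succ_mul]; exact (Nat.mul_le_mul_right l hi).trans hM
  have hsub : ∀ i < M, Set.Ico (b + i * l) (b + i * l + l) ⊆ Set.Ico b (b + N) := fun i hi =>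
    Set.Ico_subset_Ico (by omega) (by have := hle i hi; omega)
  have hn : Set.Ico b (b + N) ⊆ Set.Iio n := fun i hi => hi.2.trans_le hb
  refine ⟨fun i => v '' Set.Ico (b + i * l) (b + i * l + l),
    fun i hi => ⟨Set.image_mono (hsub i hi), b + i * l, ?_, rfl⟩, fun i hi j hj hij => ?_⟩
  · have := hle i hi; omega
  · refine Disjoint.image ?_ hv ((hsub i hi).trans hn) ((hsub j hj).trans hn)
    wlog hlt : i < j generalizing i j
    · exact (this j hj i hi hij.symm (hij.lt_or_gt.resolve_left hlt)).symm
    refine (Set.Iio_disjoint_Ici (le_refl (b + i * l + l))).mono (fun _ hx => hx.2) fun x hx => ?_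
    have : i.succ * l ≤ j * l := Nat.mul_le_mul_right l hlt
    rw [Nat.succ_mul] at this
    exact le_trans (by omega) hx.1

theorem exists_notMem (hI : IsSegment v n N I) (hv : Set.InjOn v (Set.Iio n)) (y : V) :
    ∃ J ⊆ I, IsSegment v n (N / 2) J ∧ y ∉ J := by
  obtain ⟨J, hJ, hdisj⟩ := hI.exists_pairwiseDisjoint hv (M := 2) (l := N / 2) (by omega)
  by_cases hy : y ∈ J 0
  · exact ⟨J 1, (hJ 1 one_lt_two).1, (hJ 1 one_lt_two).2, Set.disjoint_left.1
      (hdisj (Set.mem_Iio.2 two_pos) (Set.mem_Iio.2 one_lt_two) zero_ne_one) hy⟩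
  · exact ⟨J 0, (hJ 0 two_pos).1, (hJ 0 two_pos).2, hy⟩

theorem isRoomy (hI : IsSegment v n N I) (hv : IsPathOn G v n)
    (hp : ∀ u, ¬ Induces G pathRel (p + 1) u) (hN : p + 2 ≤ N) : IsRoomy G I := by
  refine ⟨hI.preconnected hv, ?_⟩
  obtain ⟨b, hb, rfl⟩ := hI
  have hw : IsPathOn G (fun i => v (b + i)) (p + 2) :=
    ⟨fun i hi j hj hij => by
      simp only [Set.mem_Iio] at hi hj
      have := hv.injOn (Set.mem_Iio.2 (by omega)) (Set.mem_Iio.2 (by omega)) hij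
      omega, fun i hi => hv.adj (b + i) (by omega)⟩
  obtain ⟨Y, hY, htripod⟩ := hw.exists_isTripod (hp _)
  refine ⟨Y, hY.trans ?_, htripod⟩
  rintro _ ⟨i, hi, rfl⟩
  rw [Set.mem_Iio] at hi
  exact ⟨b + i, ⟨by omega, by omega⟩, rfl⟩

end IsSegment

theorem HubsThroughout.mono {D' M : ℕ} (hX : HubsThroughout G v n X (D * D') N I) (hJ : J ⊆ I)
    (hN : N ≤ D * M) : HubsThroughout G v n X D' M J := fun J' hJ' M' hseg hM =>
  hX J' (hJ'.trans hJ) M' hseg (by rw [mul_assoc]; exact hN.trans (Nat.mul_le_mul_left D hM))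

theorem EscapesHubs.exists_not_touches (hesc : EscapesHubs G v n p (h + 1) K)
    (hv : Set.InjOn v (Set.Iio n)) (hK : 0 < K) (hX' : X'.card = h) (hI : IsSegment v n N I)
    (hN : 4 * K * (p + 2) ≤ N) (hhub : HubsThroughout G v n X' (4 * K) N I) {y : V}
    (hy : y ∉ X') :
    ∃ J ⊆ I, ∃ M, IsSegment v n M J ∧ N ≤ 4 * K * M ∧ y ∉ J ∧ ¬ Touches G y J := by
  -- One factor `2` of `4` pays for halving `I` to avoid `y`, the other for rounding `N / 2`.
  classical
  have hKp : 0 < K * (p + 2) := by positivity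
  rw [mul_assoc] at hN
  obtain ⟨I', hI', hhalf, hyI'⟩ := hI.exists_notMem hv y
  have hnot := hesc (insert y X') I' (N / 2) (by rw [Finset.card_insert_of_notMem hy, hX']) hhalf
    (by omega)
  simp only [HubsThroughout, not_forall] at hnot
  obtain ⟨J, hJ, M, hseg, hM, hnot⟩ := hnot
  have hNM : N ≤ 4 * K * M := by rw [mul_assoc]; omega
  have hJX := hhub J (hJ.trans hI') M hseg hNM
  refine ⟨J, hJ.trans hI', M, hseg, hNM, fun h => hyI' (hJ h), fun hyJ => hnot ?_⟩
  rw [Finset.coe_insert]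
  exact ⟨hJX.preconnected, Set.disjoint_insert_left.2 ⟨fun h => hyI' (hJ h), hJX.disjoint⟩,
    Set.forall_mem_insert.2 ⟨hyJ, hJX.touches⟩⟩

theorem EscapesHubs.canDodge (hesc : EscapesHubs G v n p (h + 1) K) (hv : IsPathOn G v n)
    (hp : ∀ u, ¬ Induces G pathRel (p + 1) u) (hK : 0 < K) (hX' : X'.card = h)
    (hXI : Disjoint (X' : Set V) I) {j : ℕ} (hJ : IsSegment v n N J) (hJI : J ⊆ I)
    (hN : (4 * K) ^ j * (p + 2) ≤ N) (hhub : HubsThroughout G v n X' ((4 * K) ^ j) N J) :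
    CanDodge G I j J := by
  have hroomy : IsRoomy G J :=
    hJ.isRoomy hv hp ((Nat.le_mul_of_pos_left _ (by positivity)).trans hN)
  induction j generalizing J N with
  | zero => exact hroomy
  | succ j ih =>
    refine ⟨hroomy, fun y hy => ?_⟩
    have hpow : 4 * K ≤ (4 * K) ^ (j + 1) := Nat.le_self_pow (by omega) _
    obtain ⟨J', hJ', M, hseg, hNM, hyJ', hyt⟩ := hesc.exists_not_touches hv.injOn hK hX' hJ
      ((Nat.mul_le_mul_right _ hpow).trans hN)
      (fun J' hJ' M hseg hM => hhub J' hJ' M hseg (hM.trans (Nat.mul_le_mul_right _ hpow)))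
      fun hyX => Set.disjoint_left.1 hXI hyX hy
    rw [pow_succ'] at hhub hN
    have hM : (4 * K) ^ j * (p + 2) ≤ M := by
      rw [mul_assoc] at hN
      exact Nat.le_of_mul_le_mul_left (hN.trans hNM) (by positivity)
    exact ⟨J', hJ', hyJ', hyt, ih hseg (hJ'.trans hJI) hM (hhub.mono hJ' hNM)
      (hseg.isRoomy hv hp ((Nat.le_mul_of_pos_left _ (by positivity)).trans hM))⟩

theorem EscapesHubs.pred {l : ℕ} (hesc : EscapesHubs G v n p (h + 1) K) (hv : IsPathOn G v n)
    (hp : ∀ u, ¬ Induces G pathRel (p + 1) u) (hl : ∀ k, l ≤ k → ¬ HasDoubleFork G k)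
    (hK : 0 < K) : EscapesHubs G v n p h ((4 * K) ^ (l + 4)) := fun X I N hX hI hN hhub => by
  have hXI : Disjoint (X : Set V) I := (hhub I subset_rfl N hI
    (Nat.le_mul_of_pos_left _ (by positivity))).disjoint
  obtain ⟨k, hk, hfork⟩ := (hesc.canDodge hv hp hK hX hXI hI subset_rfl hN
    hhub).exists_hasDoubleFork hI.finite
  exact hl k hk hfork

end Segments

theorem exists_escapesHubs.{u} {L : ℕ} (hL : 2 ≤ L) (q : ℕ) : ∃ h K : ℕ, 0 < K ∧
    ∀ {V : Type u} {G : SimpleGraph V}, NoLongHole G L →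
      (completeBipartiteGraph (Fin q) (Fin q)).Free G →
      ∀ {v : ℕ → V} {n : ℕ}, Set.InjOn v (Set.Iio n) → ∀ p, EscapesHubs G v n p h K := by
  obtain ⟨h, M, hhub⟩ := exists_forall_not_isHubSet.{u, 0} hL q
  refine ⟨h, 2 * M + 1, by omega, fun hG hfree v n hv p X I N hX hI hN hXI => ?_⟩
  set Q := N / (2 * M + 1)
  have hlow : (2 * M + 1) * Q ≤ N := Nat.mul_div_le N _
  have hupp : N < (2 * M + 1) * (Q + 1) := Nat.lt_mul_div_succ N (by omega)
  have hQ1 : 1 ≤ Q := (Nat.le_div_iff_mul_le (by omega)).2 (by nlinarith)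
  obtain ⟨J, hJ, hdisj⟩ := hI.exists_pairwiseDisjoint hv (M := M) (l := Q + 1) (by nlinarith)
  have hrange : ∀ i ∈ Finset.range M, i < M := fun i => Finset.mem_range.1
  refine hhub hG hfree hX.ge (C := Finset.range M) (R := J) ?_ (Finset.card_range M).ge
    fun i hi => hXI (J i) (hJ i (hrange i hi)).1 (Q + 1) (hJ i (hrange i hi)).2 hupp.le
  rwa [Finset.coe_range]

theorem exists_order_lt.{u} {L : ℕ} (hL : 2 ≤ L) (q l : ℕ) : ∃ K : ℕ, 0 < K ∧
    ∀ {V : Type u} {G : SimpleGraph V}, NoLongHole G L →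
      (completeBipartiteGraph (Fin q) (Fin q)).Free G → (∀ k, l ≤ k → ¬ HasDoubleFork G k) →
      ∀ {v : ℕ → V} {n p : ℕ}, IsPathOn G v n → (∀ u, ¬ Induces G pathRel (p + 1) u) →
        n < K * (p + 2) := by
  obtain ⟨h, K, hK, hesc⟩ := exists_escapesHubs.{u} hL q
  suffices ∀ j, j ≤ h → ∃ K : ℕ, 0 < K ∧ ∀ {V : Type u} {G : SimpleGraph V}, NoLongHole G L →
      (completeBipartiteGraph (Fin q) (Fin q)).Free G → (∀ k, l ≤ k → ¬ HasDoubleFork G k) →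
      ∀ {v : ℕ → V} {n p : ℕ}, IsPathOn G v n → (∀ u, ¬ Induces G pathRel (p + 1) u) →
        EscapesHubs G v n p j K by
    obtain ⟨K, hK, hesc⟩ := this 0 (Nat.zero_le h)
    refine ⟨K, hK, fun hG hfree hl v n p hv hp => ?_⟩
    by_contra! hn
    refine hesc hG hfree hl hv hp ∅ (v '' Set.Ico 0 (0 + n)) n rfl ⟨0, by omega, rfl⟩ hn ?_
    exact fun J _ M hJ _ => ⟨hJ.preconnected hv, by simp, by simp⟩
  intro j hj
  induction hj using Nat.decreasingInduction with
  | self => exact ⟨K, hK, fun {V G} hG hfree _ {v n p} hv _ => hesc hG hfree hv.injOn p⟩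
  | of_succ j _ ih =>
    obtain ⟨K, hK, hesc⟩ := ih
    exact ⟨(4 * K) ^ (l + 4), by positivity, fun {V G} hG hfree hl {v n p} hv hp =>
      (hesc hG hfree hl hv hp).pred hv hp hl hK⟩

theorem exists_linear_bound.{u} {L : ℕ} (hL : 2 ≤ L) (q l : ℕ) : ∃ c : ℝ, 0 < c ∧
    ∀ {V : Type u} {G : SimpleGraph V}, NoLongHole G L →
      (completeBipartiteGraph (Fin q) (Fin q)).Free G → (∀ k, l ≤ k → ¬ HasDoubleFork G k) →
      ∀ {m : ℕ}, HasPathOfOrder G m → HasInducedPathGE G (c * m) := by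
  obtain ⟨K, hK, hbound⟩ := exists_order_lt.{u} hL q l
  refine ⟨(3 * K : ℝ)⁻¹, by positivity, fun {V G} hG hfree hl m hm => ?_⟩
  obtain ⟨x, y, w, hw, rfl⟩ := hm
  suffices ∃ p u, Induces G pathRel (p + 1) u ∧ w.length + 1 ≤ 3 * K * (p + 1) by
    obtain ⟨p, u, hu, hle⟩ := this
    refine ⟨p + 1, ?_, patternGraph_pathRel (p + 1) ▸ hu.nonempty_embedding⟩
    rw [inv_mul_le_iff₀ (by positivity)]
    exact_mod_cast hle
  by_cases hex : ∃ p, ∀ u, ¬ Induces G pathRel (p + 1) u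
  · classical
    have hnone := Nat.find_spec hex
    obtain ⟨p, hp⟩ := Nat.exists_eq_succ_of_ne_zero (n := Nat.find hex) fun h0 =>
      (h0 ▸ hnone) (fun _ => x) fun i j _ _ => by omega
    have hlt := hbound hG hfree hl (isPathOn_getVert hw) hnone
    have hmin := Nat.find_min hex (m := p) (by omega)
    push Not at hmin
    obtain ⟨u, hu⟩ := hmin
    exact ⟨p, u, hu, by rw [hp] at hlt; nlinarith⟩
  · push Not at hex
    obtain ⟨u, hu⟩ := hex w.length
    exact ⟨w.length, u, hu, Nat.le_mul_of_pos_left _ (by positivity)⟩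

/-! ### Antichains and well-quasi-ordered classes -/

section Antichains

variable {W : Type*} {H : SimpleGraph W}

theorem surjective_of_degree_le [Nonempty W] [H.LocallyFinite] [G.LocallyFinite] (f : H ↪g G)
    (hG : G.Preconnected) (hdeg : ∀ x, G.degree (f x) ≤ H.degree x) : Function.Surjective f := by
  classical
  by_contra! hf
  simp only [Function.Surjective, not_forall] at hf
  obtain ⟨y, hy⟩ := hf
  obtain ⟨x₀⟩ := ‹Nonempty W›
  obtain ⟨w⟩ := hG (f x₀) y
  obtain ⟨d, -, ⟨x, hx⟩, hd⟩ := w.exists_boundary_dart (Set.range f) ⟨x₀, rfl⟩ hy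
  have hsub : (H.neighborFinset x).map f.toEmbedding ⊆ G.neighborFinset (f x) := fun z hz => by
    obtain ⟨x', hx', rfl⟩ := Finset.mem_map.1 hz
    rw [mem_neighborFinset] at hx' ⊢
    exact f.map_adj_iff.2 hx'
  have heq := Finset.eq_of_subset_of_card_le hsub (by simpa using hdeg x)
  have hmem : d.snd ∈ G.neighborFinset (f x) := by
    rw [mem_neighborFinset, hx]
    exact d.adj
  rw [← heq] at hmem
  obtain ⟨x', -, hx'⟩ := Finset.mem_map.1 hmem
  exact hd ⟨x', hx'⟩

theorem isEmpty_cycleGraph_embedding {k k' : ℕ} (h : k < k') :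
    IsEmpty (cycleGraph (k + 3) ↪g cycleGraph (k' + 3)) := by
  refine ⟨fun f => ?_⟩
  have hsurj := surjective_of_degree_le f cycleGraph_preconnected fun x => by
    rw [cycleGraph_degree_three_le, cycleGraph_degree_three_le]
  have := Fintype.card_le_of_surjective _ hsurj
  rw [Fintype.card_fin, Fintype.card_fin] at this
  omega

theorem exists_induces_of_embedding {R : ℕ → ℕ → Prop} {n : ℕ} (f : patternGraph R (n + 1) ↪g G) :
    ∃ u, Induces G R (n + 1) u := by
  refine ⟨fun i => f (Fin.ofNat (n + 1) i), fun i j hij hj => ?_⟩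
  have hlt : Fin.ofNat (n + 1) i < Fin.ofNat (n + 1) j := by
    simpa [Fin.lt_def, Nat.mod_eq_of_lt hj, Nat.mod_eq_of_lt (hij.trans hj)] using hij
  refine ⟨f.injective.ne hlt.ne, ?_⟩
  rw [f.map_adj_iff, patternGraph_adj_of_lt hlt]
  simp [Nat.mod_eq_of_lt hj, Nat.mod_eq_of_lt (hij.trans hj)]

theorem doubleForkRel_true_of_adj {p q : Prop} {k : ℕ} {x y : Fin (k + 5)}
    (h : (patternGraph (doubleForkRel p q k) (k + 5)).Adj x y) :
    doubleForkRel True True k x y ∨ doubleForkRel True True k y x := by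
  have hmono : ∀ {i j : ℕ}, doubleForkRel p q k i j → doubleForkRel True True k i j := by
    simp only [doubleForkRel]
    grind
  rw [patternGraph, fromRel_adj] at h
  exact h.2.imp (fun h => hmono h.2) fun h => hmono h.2

theorem eq_branch_of_three_adj {p q : Prop} {k : ℕ} {x y₁ y₂ y₃ : Fin (k + 5)} (h₁₂ : y₁ ≠ y₂)
    (h₁₃ : y₁ ≠ y₃) (h₂₃ : y₂ ≠ y₃)
    (h₁ : (patternGraph (doubleForkRel p q k) (k + 5)).Adj x y₁)
    (h₂ : (patternGraph (doubleForkRel p q k) (k + 5)).Adj x y₂)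
    (h₃ : (patternGraph (doubleForkRel p q k) (k + 5)).Adj x y₃) :
    (x : ℕ) = 2 ∨ (x : ℕ) = k + 2 := by
  have h₁ := doubleForkRel_true_of_adj h₁
  have h₂ := doubleForkRel_true_of_adj h₂
  have h₃ := doubleForkRel_true_of_adj h₃
  simp only [ne_eq, Fin.ext_iff, doubleForkRel, and_true] at *
  omega

theorem min_le_max_add_of_adj {p q : Prop} {k s : ℕ} {u : ℕ → Fin (k + 5)}
    (hu : ∀ i < s, (patternGraph (doubleForkRel p q k) (k + 5)).Adj (u i) (u (i + 1))) :
    min (u s : ℕ) (k + 2) ≤ max (u 0 : ℕ) 2 + s ∧ min (u 0 : ℕ) (k + 2) ≤ max (u s : ℕ) 2 + s := by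
  induction s with
  | zero => omega
  | succ s ih =>
    have hadj := doubleForkRel_true_of_adj (hu s s.lt_succ_self)
    have := ih fun i hi => hu i (by omega)
    simp only [doubleForkRel, and_true] at hadj
    omega

theorem isEmpty_doubleFork_embedding {p q p' q' : Prop} {k k' : ℕ} (h : k < k') :
    IsEmpty (patternGraph (doubleForkRel p q (k + 1)) (k + 1 + 5) ↪g
      patternGraph (doubleForkRel p' q' (k' + 1)) (k' + 1 + 5)) := by
  refine ⟨fun f => ?_⟩
  obtain ⟨u, hu⟩ := exists_induces_of_embedding f
  have hne : ∀ i j, i < j → j < k + 6 → u i ≠ u j := fun i j hij hj => (hu hij hj).1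
  have hadj : ∀ i j, i < j → j < k + 6 → doubleForkRel p q (k + 1) i j →
      (patternGraph (doubleForkRel p' q' (k' + 1)) (k' + 1 + 5)).Adj (u i) (u j) :=
    fun i j hij hj => (hu hij hj).2.2
  have hleft : (u 2 : ℕ) = 2 ∨ (u 2 : ℕ) = k' + 1 + 2 :=
    eq_branch_of_three_adj (hne 0 1 (by omega) (by omega)) (hne 0 3 (by omega) (by omega))
      (hne 1 3 (by omega) (by omega))
      (hadj 0 2 (by omega) (by omega) (by simp [doubleForkRel])).symm
      (hadj 1 2 (by omega) (by omega) (by simp [doubleForkRel])).symm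
      (hadj 2 3 (by omega) (by omega) (by simp [doubleForkRel]))
  have hright : (u (k + 3) : ℕ) = 2 ∨ (u (k + 3) : ℕ) = k' + 1 + 2 :=
    eq_branch_of_three_adj (hne (k + 2) (k + 4) (by omega) (by omega))
      (hne (k + 2) (k + 5) (by omega) (by omega)) (hne (k + 4) (k + 5) (by omega) (by omega))
      (hadj (k + 2) (k + 3) (by omega) (by omega) (by simp [doubleForkRel])).symm
      (hadj (k + 3) (k + 4) (by omega) (by omega) (by simp [doubleForkRel]))
      (hadj (k + 3) (k + 5) (by omega) (by omega) (by simp [doubleForkRel]))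
  have hbranch := Fin.val_ne_iff.2 (hne 2 (k + 3) (by omega) (by omega))
  have hpath := min_le_max_add_of_adj (s := k + 1) (u := fun i => u (i + 2)) fun i hi =>
    hadj (i + 2) (i + 1 + 2) (by omega) (by omega)
      (.inr (.inr (.inl ⟨by omega, by omega, by omega⟩)))
  simp only [zero_add, show k + 1 + 2 = k + 3 by omega] at hpath
  omega

end Antichains

/-- The class `𝒢` of finite graphs is closed under taking induced subgraphs. -/
def IsHereditary (𝒢 : ∀ ⦃n : ℕ⦄, SimpleGraph (Fin n) → Prop) : Prop :=
  ∀ ⦃n m : ℕ⦄ (G : SimpleGraph (Fin n)) (H : SimpleGraph (Fin m)), 𝒢 G → Nonempty (H ↪g G) → 𝒢 H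

/-- The class `𝒢` of finite graphs is well-quasi-ordered by induced subgraphs. -/
def IsWellQuasiOrdered (𝒢 : ∀ ⦃n : ℕ⦄, SimpleGraph (Fin n) → Prop) : Prop :=
  ∀ f : ℕ → Σ n : ℕ, SimpleGraph (Fin n), (∀ i, 𝒢 (f i).2) →
    ∃ i j : ℕ, i < j ∧ Nonempty ((f i).2 ↪g (f j).2)

section Classes

open Filter

variable {𝒢 : ∀ ⦃n : ℕ⦄, SimpleGraph (Fin n) → Prop}

theorem IsWellQuasiOrdered.eventually_not_mem (hwqo : IsWellQuasiOrdered 𝒢) {σ : ℕ → ℕ}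
    (H : ∀ k, SimpleGraph (Fin (σ k))) (hH : ∀ k k', k < k' → IsEmpty (H k ↪g H k')) :
    ∀ᶠ k in atTop, ¬ 𝒢 (H k) := by
  by_contra hfreq
  obtain ⟨φ, hφ, hmem⟩ := extraction_of_frequently_atTop hfreq
  obtain ⟨i, j, hij, ⟨f⟩⟩ := hwqo (fun i => ⟨σ (φ i), H (φ i)⟩) hmem
  exact (hH _ _ (hφ hij)).false f

theorem IsWellQuasiOrdered.exists_noLongHole (hwqo : IsWellQuasiOrdered 𝒢)
    (hhered : IsHereditary 𝒢) :
    ∃ L, 2 ≤ L ∧ ∀ {n : ℕ} (G : SimpleGraph (Fin n)), 𝒢 G → NoLongHole G L := by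
  obtain ⟨L, hL⟩ := eventually_atTop.1 (hwqo.eventually_not_mem (fun k => cycleGraph (k + 3))
    fun _ _ => isEmpty_cycleGraph_embedding)
  refine ⟨L + 3, by omega, fun G hG n hn => ⟨fun f => hL (n - 3) (by omega) ?_⟩⟩
  rw [Nat.sub_add_cancel (by omega)]
  exact hhered G _ hG ⟨f⟩

theorem IsWellQuasiOrdered.exists_not_hasDoubleFork (hwqo : IsWellQuasiOrdered 𝒢)
    (hhered : IsHereditary 𝒢) :
    ∃ l, ∀ {n : ℕ} (G : SimpleGraph (Fin n)), 𝒢 G → ∀ k, l ≤ k → ¬ HasDoubleFork G k := by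
  have hevent : ∀ᶠ k in atTop, ∀ p q : Prop,
      ¬ 𝒢 (patternGraph (doubleForkRel p q (k + 1)) (k + 1 + 5)) :=
    eventually_all.2 fun p => eventually_all.2 fun q => hwqo.eventually_not_mem
      (fun k => patternGraph (doubleForkRel p q (k + 1)) (k + 1 + 5))
      fun _ _ => isEmpty_doubleFork_embedding
  obtain ⟨l, hl⟩ := eventually_atTop.1 hevent
  refine ⟨l + 1, fun G hG k hk hfork => ?_⟩
  obtain ⟨p, q, u, hu⟩ := hfork
  obtain ⟨k, rfl⟩ := Nat.exists_eq_add_of_le' ((Nat.le_add_left 1 l).trans hk)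
  exact hl k (by omega) p q (hhered G _ hG hu.nonempty_embedding)

theorem IsHereditary.exists_completeBipartiteGraph_free (hhered : IsHereditary 𝒢)
    (hcliques : ¬ ∀ n : ℕ, 𝒢 (⊤ : SimpleGraph (Fin n)))
    (hbicliques : ¬ ∀ s t : ℕ, ∃ (n : ℕ) (G : SimpleGraph (Fin n)),
      𝒢 G ∧ Nonempty (G ≃g completeBipartiteGraph (Fin s) (Fin t))) :
    ∃ q, ∀ {n : ℕ} (G : SimpleGraph (Fin n)), 𝒢 G →
      (completeBipartiteGraph (Fin q) (Fin q)).Free G := by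
  push Not at hcliques hbicliques
  obtain ⟨r, hr⟩ := hcliques
  obtain ⟨s, t, hst⟩ := hbicliques
  obtain ⟨q, hq⟩ := exists_completeBipartiteGraph_free_or_embedding.{0} r s t
  refine ⟨q, fun G hG => hq G ?_ ⟨fun f => ?_⟩⟩
  · by_contra hclique
    exact hr (hhered G _ hG ⟨topEmbeddingOfNotCliqueFree hclique⟩)
  · let e : (completeBipartiteGraph (Fin s) (Fin t)).comap finSumFinEquiv.symm ≃g _ :=
      Iso.comap finSumFinEquiv.symm _
    exact (hst _ _ (hhered G _ hG ⟨f.comp e.toEmbedding⟩)).false e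

end Classes

theorem exists_rpow_le_max {c : ℝ} (hc : 0 < c) :
    ∃ d : ℝ, 0 < d ∧ d < 1 ∧ ∀ x : ℝ, 1 ≤ x → x ^ d ≤ max (min 2 x) (c * x) := by
  -- With `d = 1 / (k + 2)` and `y = x ^ d`, either `y ≤ 2` or `x / y = y ^ (k + 1) ≥ 1 / c`.
  obtain ⟨k, hk⟩ := pow_unbounded_of_one_lt c⁻¹ (one_lt_two (α := ℝ))
  refine ⟨((k + 2 : ℕ) : ℝ)⁻¹, by positivity, inv_lt_one_of_one_lt₀ (by norm_cast; omega),
    fun x hx => ?_⟩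
  set y := x ^ ((k + 2 : ℕ) : ℝ)⁻¹ with hy
  have hy1 : 1 ≤ y := one_le_rpow hx (by positivity)
  have hxy : x = y ^ (k + 1) * y := by
    rw [← pow_succ, hy, rpow_inv_natCast_pow (by positivity) (by omega)]
  rcases le_or_gt y 2 with hy2 | hy2
  · refine le_max_of_le_left (le_min hy2 ?_)
    rw [hxy]
    exact le_mul_of_one_le_left (by positivity) (one_le_pow₀ hy1)
  · refine le_max_of_le_right ?_
    have hpow : c⁻¹ ≤ y ^ (k + 1) := calc
      c⁻¹ ≤ 2 ^ k := hk.le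
      _ ≤ y ^ k := by gcongr
      _ ≤ y ^ (k + 1) := pow_le_pow_right₀ hy1 k.le_succ
    rw [hxy, ← mul_assoc]
    exact le_mul_of_one_le_left (by positivity) ((inv_le_iff_one_le_mul₀' hc).1 hpow)

theorem hasInducedPathGE_min_two {m : ℕ} (hm : HasPathOfOrder G m) :
    HasInducedPathGE G (min 2 m) := by
  obtain ⟨x, y, w, hw, rfl⟩ := hm
  have hv := isPathOn_getVert hw
  have hu : Induces G pathRel (min 2 (w.length + 1)) w.getVert := fun i j hij hj => by
    obtain ⟨rfl, rfl⟩ : i = 0 ∧ j = 1 := by omega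
    have hadj := hv.adj 0 (by omega)
    exact ⟨hadj.ne, iff_of_true hadj rfl⟩
  exact ⟨_, by push_cast; exact le_rfl, patternGraph_pathRel _ ▸ hu.nonempty_embedding⟩

theorem exists_rpow_of_linear.{u} {c : ℝ} (hc : 0 < c) : ∃ d : ℝ, 0 < d ∧ d < 1 ∧
    ∀ {V : Type u} {G : SimpleGraph V} {m : ℕ}, HasPathOfOrder G m → HasInducedPathGE G (c * m) →
      HasInducedPathGE G ((m : ℝ) ^ d) := by
  obtain ⟨d, hd0, hd1, hd⟩ := exists_rpow_le_max hc
  refine ⟨d, hd0, hd1, fun {V G m} hpath hlin => ?_⟩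
  have hm : 1 ≤ (m : ℝ) := by
    obtain ⟨x, y, w, -, rfl⟩ := hpath
    exact_mod_cast Nat.le_add_left 1 w.length
  rcases le_max_iff.1 (hd m hm) with hle | hle
  · exact (hasInducedPathGE_min_two hpath).imp fun _ => And.imp_left hle.trans
  · exact hlin.imp fun _ => And.imp_left hle.trans

end LongInducedPath

open LongInducedPath in
theorem stmt6_general (𝒢 : ∀ ⦃n : ℕ⦄, SimpleGraph (Fin n) → Prop)
    (hhered : ∀ {n m : ℕ} (G : SimpleGraph (Fin n)) (H : SimpleGraph (Fin m)),
      𝒢 G → Nonempty (H ↪g G) → 𝒢 H)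
    (hcliques : ¬ ∀ n : ℕ, 𝒢 (⊤ : SimpleGraph (Fin n)))
    (hbicliques : ¬ ∀ s t : ℕ, ∃ (n : ℕ) (G : SimpleGraph (Fin n)),
      𝒢 G ∧ Nonempty (G ≃g completeBipartiteGraph (Fin s) (Fin t)))
    (hwqo : ∀ f : ℕ → Σ n : ℕ, SimpleGraph (Fin n), (∀ i, 𝒢 (f i).2) →
      ∃ i j : ℕ, i < j ∧ Nonempty ((f i).2 ↪g (f j).2)) :
    ∃ c : ℝ, 0 < c ∧
      ∀ {n : ℕ} (G : SimpleGraph (Fin n)) (m : ℕ), 𝒢 G → HasPathOfOrder G m →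
        HasInducedPathGE G (c * m) := by
  have hhered : IsHereditary 𝒢 := @hhered
  have hwqo : IsWellQuasiOrdered 𝒢 := hwqo
  obtain ⟨L, hL, hhole⟩ := hwqo.exists_noLongHole hhered
  obtain ⟨q, hq⟩ := hhered.exists_completeBipartiteGraph_free hcliques hbicliques
  obtain ⟨l, hl⟩ := hwqo.exists_not_hasDoubleFork hhered
  obtain ⟨c, hc, hbound⟩ := exists_linear_bound.{0} hL q l
  exact ⟨c, hc, fun G _ hG => hbound (hhole G hG) (hq G hG) (hl G hG)⟩

theorem stmt6 (𝒢 : ∀ ⦃n : ℕ⦄, SimpleGraph (Fin n) → Prop)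
    (hhered : ∀ {n m : ℕ} (G : SimpleGraph (Fin n)) (H : SimpleGraph (Fin m)),
      𝒢 G → Nonempty (H ↪g G) → 𝒢 H)
    (hcliques : ¬ ∀ n : ℕ, 𝒢 (⊤ : SimpleGraph (Fin n)))
    (hbicliques : ¬ ∀ s t : ℕ, ∃ (n : ℕ) (G : SimpleGraph (Fin n)),
      𝒢 G ∧ Nonempty (G ≃g completeBipartiteGraph (Fin s) (Fin t)))
    (hwqo : ∀ f : ℕ → Σ n : ℕ, SimpleGraph (Fin n), (∀ i, 𝒢 (f i).2) →
      ∃ i j : ℕ, i < j ∧ Nonempty ((f i).2 ↪g (f j).2)) :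
    ∃ d : ℝ, 0 < d ∧ d < 1 ∧
      ∀ {n : ℕ} (G : SimpleGraph (Fin n)) (m : ℕ), 𝒢 G → HasPathOfOrder G m →
        HasInducedPathGE G ((m : ℝ) ^ d) := by
  obtain ⟨c, hc, h⟩ := stmt6_general 𝒢 hhered hcliques hbicliques hwqo
  obtain ⟨d, hd0, hd1, hd⟩ := LongInducedPath.exists_rpow_of_linear.{0} hc
  exact ⟨d, hd0, hd1, fun G m hG hm => hd hm (h G m hG hm)⟩
end
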